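/- arXiv:1704.07677 — 6 statements merged into one kernel-verified Lean document; each statement's English description precedes it below -/
import Mathlib

section
/- For every set Γ of propositional formulas and every propositional formula A: Γ ⊢_FPL A if and only if Γ^b ⊢_GL A^b. -/
/-! ### Modal formulas -/

inductive MF : Type
  | atom : ℕ → MF
  | bot  : MF
  | and  : MF → MF → MF
  | or   : MF → MF → MF
  | imp  : MF → MF → MF
  | neg  : MF → MF
  | box  : MF → MF
  deriving DecidableEq

namespace MF

/-- The set of atoms occurring in a modal formula. -/
def atoms : MF → Set ℕ
  | atom n => {n}
  | bot => ∅
  | and A B => atoms A ∪ atoms B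
  | or A B => atoms A ∪ atoms B
  | imp A B => atoms A ∪ atoms B
  | neg A => atoms A
  | box A => atoms A

/-- A boolean valuation on modal formulas respecting the classical connectives
(boxed formulas and atoms are treated as arbitrary). -/
def Respects (v : MF → Bool) : Prop :=
  v bot = false ∧
  (∀ A B, v (and A B) = (v A && v B)) ∧
  (∀ A B, v (or A B) = (v A || v B)) ∧
  (∀ A B, v (imp A B) = (!(v A) || v B)) ∧
  (∀ A, v (neg A) = !(v A))

/-- Classical propositional tautology (in the modal language). -/
def IsTaut (A : MF) : Prop := ∀ v, Respects v → v A = true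

end MF

/-- Hilbert-style provability in the normal modal logic `K` extended by the
axiom scheme `Ax`: classical tautologies, scheme K, the extra axioms,
modus ponens and necessitation. -/
inductive Prv (Ax : MF → Prop) : MF → Prop
  | taut {A : MF} : MF.IsTaut A → Prv Ax A
  | axK {A B : MF} : Prv Ax ((MF.box (A.imp B)).imp ((MF.box A).imp (MF.box B)))
  | extra {A : MF} : Ax A → Prv Ax A
  | mp {A B : MF} : Prv Ax (A.imp B) → Prv Ax A → Prv Ax B
  | nec {A : MF} : Prv Ax A → Prv Ax A.box

/-- Scheme 4 : □A → □□A. -/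
def Ax4 (A : MF) : Prop := ∃ B, A = (MF.box B).imp (MF.box (MF.box B))
/-- Scheme T : □A → A. -/
def AxT (A : MF) : Prop := ∃ B, A = (MF.box B).imp B
/-- Scheme D : ¬□⊥. -/
def AxD (A : MF) : Prop := A = MF.neg (MF.box MF.bot)
/-- Löb's scheme L : □(□A→A) → □A. -/
def AxGL (A : MF) : Prop := ∃ B, A = (MF.box ((MF.box B).imp B)).imp (MF.box B)

def AxK4  : MF → Prop := Ax4
def AxKD4 : MF → Prop := fun A => Ax4 A ∨ AxD A
def AxS4  : MF → Prop := fun A => Ax4 A ∨ AxT A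

def PrvK   : MF → Prop := Prv (fun _ => False)
def PrvK4  : MF → Prop := Prv AxK4
def PrvKD4 : MF → Prop := Prv AxKD4
def PrvS4  : MF → Prop := Prv AxS4
def PrvGL  : MF → Prop := Prv AxGL

/-- Conjunction of a finite list of modal formulas (empty conjunction is ⊤ := ⊥→⊥). -/
def conjL (l : List MF) : MF := l.foldr MF.and (MF.imp MF.bot MF.bot)

/-- `ModalConseq Ax Γ A` : there are B₁,…,Bₙ ∈ Γ with ⊢ (B₁∧…∧Bₙ)→A in K + Ax. -/
def ModalConseq (Ax : MF → Prop) (Γ : Set MF) (A : MF) : Prop :=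
  ∃ l : List MF, (∀ B ∈ l, B ∈ Γ) ∧ Prv Ax ((conjL l).imp A)

/-! ### Annotated modal formulas and translations -/

/-- Modal formulas with every occurrence of □ annotated by a natural number. -/
inductive AMF : Type
  | atom : ℕ → AMF
  | bot  : AMF
  | and  : AMF → AMF → AMF
  | or   : AMF → AMF → AMF
  | imp  : AMF → AMF → AMF
  | neg  : AMF → AMF
  | box  : ℕ → AMF → AMF

namespace AMF

/-- Forget the annotations. -/
def erase : AMF → MF
  | atom n => .atom n
  | bot => .bot
  | and A B => .and (erase A) (erase B)
  | or A B => .or (erase A) (erase B)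
  | imp A B => .imp (erase A) (erase B)
  | neg A => .neg (erase A)
  | box _ A => .box (erase A)

/-- The list of all annotations occurring in an annotated formula. -/
def labels : AMF → List ℕ
  | atom _ => []
  | bot => []
  | and A B => labels A ++ labels B
  | or A B => labels A ++ labels B
  | imp A B => labels A ++ labels B
  | neg A => labels A
  | box n A => n :: labels A

/-- A translation is ordered when the number assigned to each box is strictly
greater than all numbers assigned to boxes in its scope. -/
def Ordered : AMF → Prop
  | atom _ => True
  | bot => True
  | and A B => Ordered A ∧ Ordered B
  | or A B => Ordered A ∧ Ordered B
  | imp A B => Ordered A ∧ Ordered B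
  | neg A => Ordered A
  | box n A => Ordered A ∧ ∀ m ∈ labels A, m < n

end AMF

/-- `conjQ q n` is the conjunction q₀ ∧ … ∧ q_n of the atoms `q i`. -/
def conjQ (q : ℕ → ℕ) : ℕ → MF
  | 0 => .atom (q 0)
  | n+1 => (conjQ q n).and (.atom (q (n+1)))

/-- The formula `A^t`: commutes with connectives and `(□B)^t = □(q₀∧…∧q_n → B^t)`
where `n` is the annotation on that box. -/
def AMF.trans (q : ℕ → ℕ) : AMF → MF
  | .atom n => .atom n
  | .bot => .bot
  | .and A B => (trans q A).and (trans q B)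
  | .or A B => (trans q A).or (trans q B)
  | .imp A B => (trans q A).imp (trans q B)
  | .neg A => (trans q A).neg
  | .box n A => .box ((conjQ q n).imp (trans q A))

/-! ### Kripke semantics -/

/-- Classical Kripke forcing for modal formulas. -/
def Forces {W : Type} (R : W → W → Prop) (V : ℕ → W → Prop) : W → MF → Prop
  | w, .atom n => V n w
  | _, .bot => False
  | w, .and A B => Forces R V w A ∧ Forces R V w B
  | w, .or A B => Forces R V w A ∨ Forces R V w B
  | w, .imp A B => Forces R V w A → Forces R V w B
  | w, .neg A => ¬ Forces R V w A
  | w, .box A => ∀ u, R w u → Forces R V u A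

/-- Cluster equivalence: `x = y`, or `x R y` and `y R x`. -/
def ClusterEq {W : Type} (R : W → W → Prop) (x y : W) : Prop :=
  x = y ∨ (R x y ∧ R y x)

/-- A transitive frame whose clusters form a tree and in which every cluster is
a single irreflexive point or a nonempty set of reflexive points. -/
structure TreeWithClusters {W : Type} (R : W → W → Prop) : Prop where
  trans : Transitive R
  rooted : ∃ r, ∀ x, ClusterEq R r x ∨ R r x
  treelike : ∀ x y z, R x z → R y z → (ClusterEq R x y ∨ R x y ∨ R y x)
  cluster_irrefl_singleton : ∀ x, ¬ R x x → ∀ y, ClusterEq R x y → y = x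
  cluster_homog : ∀ x y, ClusterEq R x y → (R x x → R y y)

/-! ### Expansions -/

/-- `Expansion A B` : `B ∈ E(A)`, the set of expansions of `A`. -/
inductive Expansion : MF → MF → Prop
  | atom (n) : Expansion (.atom n) (.atom n)
  | bot : Expansion .bot .bot
  | and {A B D E : MF} : Expansion A D → Expansion B E → Expansion (A.and B) (D.and E)
  | or {A B D E : MF} : Expansion A D → Expansion B E → Expansion (A.or B) (D.or E)
  | imp {A B D E : MF} : Expansion A D → Expansion B E → Expansion (A.imp B) (D.imp E)
  | neg {A D : MF} : Expansion A D → Expansion A.neg D.neg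
  | box {A D : MF} (l : List MF) : Expansion A D → (∀ E ∈ l, Expansion A E) →
      Expansion A.box (MF.box (l.foldr MF.or D))

/-! ### Propositional formulas and Visser-style natural deduction -/

inductive PF : Type
  | atom : ℕ → PF
  | bot  : PF
  | and  : PF → PF → PF
  | or   : PF → PF → PF
  | imp  : PF → PF → PF
  deriving DecidableEq

def PF.top : PF := .imp .bot .bot
def PF.neg (A : PF) : PF := A.imp .bot

/-- Natural deduction derivability from a set of assumptions.  `ef` switches
the ex falso rule on/off; `Rule` is an additional rule given as a relation
between a list of premises and a conclusion.  The base system (with `ef`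
and no extra rule) is Visser's BPC: ∧/∨ intro and elim, →I (discharging),
ex falso, and the formalized rules; no modus ponens. -/
inductive Deriv (ef : Prop) (Rule : List PF → PF → Prop) : Set PF → PF → Prop
  | hyp {Γ : Set PF} {A : PF} : A ∈ Γ → Deriv ef Rule Γ A
  | andI {Γ : Set PF} {A B : PF} : Deriv ef Rule Γ A → Deriv ef Rule Γ B → Deriv ef Rule Γ (A.and B)
  | andE1 {Γ : Set PF} {A B : PF} : Deriv ef Rule Γ (A.and B) → Deriv ef Rule Γ A
  | andE2 {Γ : Set PF} {A B : PF} : Deriv ef Rule Γ (A.and B) → Deriv ef Rule Γ B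
  | orI1 {Γ : Set PF} {A B : PF} : Deriv ef Rule Γ A → Deriv ef Rule Γ (A.or B)
  | orI2 {Γ : Set PF} {A B : PF} : Deriv ef Rule Γ B → Deriv ef Rule Γ (A.or B)
  | orE {Γ : Set PF} {A B C : PF} : Deriv ef Rule Γ (A.or B) → Deriv ef Rule (insert A Γ) C →
      Deriv ef Rule (insert B Γ) C → Deriv ef Rule Γ C
  | impI {Γ : Set PF} {A B : PF} : Deriv ef Rule (insert A Γ) B → Deriv ef Rule Γ (A.imp B)
  | exfalso {Γ : Set PF} {A : PF} : ef → Deriv ef Rule Γ .bot → Deriv ef Rule Γ A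
  | fAndI {Γ : Set PF} {A B C : PF} : Deriv ef Rule Γ (A.imp B) → Deriv ef Rule Γ (A.imp C) →
      Deriv ef Rule Γ (A.imp (B.and C))
  | fOrE {Γ : Set PF} {A B C : PF} : Deriv ef Rule Γ (A.imp C) → Deriv ef Rule Γ (B.imp C) →
      Deriv ef Rule Γ ((A.or B).imp C)
  | fTr {Γ : Set PF} {A B C : PF} : Deriv ef Rule Γ (A.imp B) → Deriv ef Rule Γ (B.imp C) →
      Deriv ef Rule Γ (A.imp C)
  | extra {Γ : Set PF} {ps : List PF} {c : PF} : Rule ps c → (∀ p ∈ ps, Deriv ef Rule Γ p) → Deriv ef Rule Γ c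

/-- No extra rule. -/
def RuleNone : List PF → PF → Prop := fun _ _ => False
/-- Rule C : from A and ¬A infer ⊥. -/
def RuleC : List PF → PF → Prop := fun ps c => ∃ A : PF, ps = [A, A.neg] ∧ c = .bot
/-- Rule R (modus ponens) : from A and A→B infer B. -/
def RuleR : List PF → PF → Prop := fun ps c => ∃ A B : PF, ps = [A, A.imp B] ∧ c = B
/-- Löb's rule L : from (A∧(A→B))→B infer A→B. -/
def RuleL : List PF → PF → Prop :=
  fun ps c => ∃ A B : PF, ps = [(A.and (A.imp B)).imp B] ∧ c = A.imp B
/-- Rule C' : from ⊤→⊥ infer ⊥. -/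
def RuleC' : List PF → PF → Prop := fun ps c => ps = [PF.top.imp .bot] ∧ c = .bot
/-- Rule R' : from ⊤→A infer A. -/
def RuleR' : List PF → PF → Prop := fun ps c => ∃ A : PF, ps = [PF.top.imp A] ∧ c = A
/-- Rule L' : from (⊤→A)→A infer ⊤→A. -/
def RuleL' : List PF → PF → Prop :=
  fun ps c => ∃ A : PF, ps = [(PF.top.imp A).imp A] ∧ c = PF.top.imp A

def BPC  : Set PF → PF → Prop := Deriv True RuleNone
def EBPC : Set PF → PF → Prop := Deriv True RuleC
def IPC  : Set PF → PF → Prop := Deriv True RuleR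
def FPL  : Set PF → PF → Prop := Deriv True RuleL
def MPC  : Set PF → PF → Prop := Deriv False RuleR

/-! ### BHK translations -/

/-- The BHK translation `b`. -/
def bhk : PF → MF
  | .atom n => .box (.atom n)
  | .bot => .box .bot
  | .and A B => (bhk A).and (bhk B)
  | .or A B => (bhk A).or (bhk B)
  | .imp A B => .box ((bhk A).imp (bhk B))

/-- The weak BHK translation `w`.  The propositional atom `n` is embedded as
the modal atom `n+1`, and the fresh atom `q` (not in the propositional
language) is the modal atom `0`; `⊥^w = □q`. -/
def wtr : PF → MF
  | .atom n => .box (.atom (n+1))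
  | .bot => .box (.atom 0)
  | .and A B => (wtr A).and (wtr B)
  | .or A B => (wtr A).or (wtr B)
  | .imp A B => .box ((wtr A).imp (wtr B))

/-! ### The cut-free sequent calculus G(KD4) -/

/-- Cut-free derivability in the sequent calculus G(KD4): axioms,
structural rules (weakening, contraction, exchange), two-sided rules for
∧, ∨, →, ¬, and the modal rules □₄R and □_D R. -/
inductive GKD4 : List MF → List MF → Prop
  | ax (A) : GKD4 [A] [A]
  | axBot : GKD4 [.bot] []
  | exL {Γ Γ' Δ : List MF} : GKD4 Γ Δ → Γ.Perm Γ' → GKD4 Γ' Δ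
  | exR {Γ Δ Δ' : List MF} : GKD4 Γ Δ → Δ.Perm Δ' → GKD4 Γ Δ'
  | wL {Γ Δ : List MF} (A : MF) : GKD4 Γ Δ → GKD4 (A :: Γ) Δ
  | wR {Γ Δ : List MF} (A : MF) : GKD4 Γ Δ → GKD4 Γ (A :: Δ)
  | cL {Γ Δ : List MF} {A : MF} : GKD4 (A :: A :: Γ) Δ → GKD4 (A :: Γ) Δ
  | cR {Γ Δ : List MF} {A : MF} : GKD4 Γ (A :: A :: Δ) → GKD4 Γ (A :: Δ)
  | andL1 {Γ Δ : List MF} {A B : MF} : GKD4 (A :: Γ) Δ → GKD4 (A.and B :: Γ) Δ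
  | andL2 {Γ Δ : List MF} {A B : MF} : GKD4 (B :: Γ) Δ → GKD4 (A.and B :: Γ) Δ
  | andR {Γ₀ Δ₀ Γ₁ Δ₁ : List MF} {A B : MF} : GKD4 Γ₀ (A :: Δ₀) → GKD4 Γ₁ (B :: Δ₁) →
      GKD4 (Γ₀ ++ Γ₁) (A.and B :: (Δ₀ ++ Δ₁))
  | orL {Γ₀ Δ₀ Γ₁ Δ₁ : List MF} {A B : MF} : GKD4 (A :: Γ₀) Δ₀ → GKD4 (B :: Γ₁) Δ₁ →
      GKD4 (A.or B :: (Γ₀ ++ Γ₁)) (Δ₀ ++ Δ₁)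
  | orR1 {Γ Δ : List MF} {A B : MF} : GKD4 Γ (A :: Δ) → GKD4 Γ (A.or B :: Δ)
  | orR2 {Γ Δ : List MF} {A B : MF} : GKD4 Γ (B :: Δ) → GKD4 Γ (A.or B :: Δ)
  | impL {Γ₀ Δ₀ Γ₁ Δ₁ : List MF} {A B : MF} : GKD4 Γ₀ (A :: Δ₀) → GKD4 (B :: Γ₁) Δ₁ →
      GKD4 (A.imp B :: (Γ₀ ++ Γ₁)) (Δ₀ ++ Δ₁)
  | impR {Γ Δ : List MF} {A B : MF} : GKD4 (A :: Γ) (B :: Δ) → GKD4 Γ (A.imp B :: Δ)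
  | negL {Γ Δ : List MF} {A : MF} : GKD4 Γ (A :: Δ) → GKD4 (A.neg :: Γ) Δ
  | negR {Γ Δ : List MF} {A : MF} : GKD4 (A :: Γ) Δ → GKD4 Γ (A.neg :: Δ)
  | box4R {Γ : List MF} {A : MF} : GKD4 (Γ ++ Γ.map MF.box) [A] → GKD4 (Γ.map MF.box) [MF.box A]
  | boxDR {Γ : List MF} : GKD4 (Γ ++ Γ.map MF.box) [] → GKD4 (Γ.map MF.box) []

/-- Disjunction of a finite list of propositional formulas (empty: ⊥). -/
def disjL : List PF → PF
  | [] => .bot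
  | [A] => A
  | A :: B :: r => A.or (disjL (B :: r))

/-! ### Kripke semantics for MPC -/

/-- Intuitionistic (minimal) forcing, where `⊥` has its own upward-closed
valuation `Vbot`. -/
def MForces {W : Type} (le : W → W → Prop) (V : ℕ → W → Prop) (Vbot : W → Prop) :
    W → PF → Prop
  | w, .atom n => V n w
  | w, .bot => Vbot w
  | w, .and A B => MForces le V Vbot w A ∧ MForces le V Vbot w B
  | w, .or A B => MForces le V Vbot w A ∨ MForces le V Vbot w B
  | w, .imp A B => ∀ u, le w u → MForces le V Vbot u A → MForces le V Vbot u B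

/-- The S4 valuation induced by an MPC valuation: the fresh atom `q` (modal
atom 0) gets `V(⊥)`, and the propositional atom `n` (modal atom `n+1`) gets `V(n)`. -/
def shiftVal {W : Type} (V : ℕ → W → Prop) (Vbot : W → Prop) : ℕ → W → Prop
  | 0 => Vbot
  | n+1 => V n

namespace S6

/-! #### Modal side -/

abbrev MC := ModalConseq AxGL

theorem conj_val {v : MF → Bool} (hv : MF.Respects v) (l : List MF) :
    v (conjL l) = true ↔ ∀ B ∈ l, v B = true := by
  obtain ⟨h1, h2, h3, h4, h5⟩ := hv
  induction l with
  | nil => simp [conjL, h4, h1]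
  | cons a l ih =>
    have : conjL (a :: l) = a.and (conjL l) := rfl
    rw [this, h2]; simp [ih]

theorem taut_iff {A : MF} : (∀ v : MF → Bool, MF.Respects v → v A = true) → Prv AxGL A :=
  fun h => Prv.taut h

theorem val_imp {v : MF → Bool} (hv : MF.Respects v) (A B : MF) :
    v (A.imp B) = true ↔ (v A = true → v B = true) := by
  rw [hv.2.2.2.1]; cases v A <;> cases v B <;> simp
theorem val_and {v : MF → Bool} (hv : MF.Respects v) (A B : MF) :
    v (A.and B) = true ↔ (v A = true ∧ v B = true) := by
  rw [hv.2.1]; simp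
theorem val_or {v : MF → Bool} (hv : MF.Respects v) (A B : MF) :
    v (A.or B) = true ↔ (v A = true ∨ v B = true) := by
  rw [hv.2.2.1]; simp
theorem val_bot {v : MF → Bool} (hv : MF.Respects v) : ¬ v MF.bot = true := by
  rw [hv.1]; simp

theorem MC.hyp {Γ : Set MF} {A : MF} (h : A ∈ Γ) : MC Γ A := by
  refine ⟨[A], by simpa using h, Prv.taut fun v hv => ?_⟩
  rw [val_imp hv, conj_val hv]; simp

theorem MC.thm {Γ : Set MF} {A : MF} (h : Prv AxGL A) : MC Γ A := by
  refine ⟨[], by simp, Prv.mp (Prv.taut fun v hv => ?_) h⟩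
  simp only [val_imp hv]; tauto

theorem MC.mp {Γ : Set MF} {A B : MF} (h1 : MC Γ (A.imp B)) (h2 : MC Γ A) : MC Γ B := by
  obtain ⟨l, hl, h1⟩ := h1
  obtain ⟨m, hm, h2⟩ := h2
  refine ⟨l ++ m, ?_, Prv.mp (Prv.mp (Prv.taut fun v hv => ?_) h1) h2⟩
  · intro X hX
    rcases List.mem_append.1 hX with h | h
    · exact hl _ h
    · exact hm _ h
  · simp only [val_imp hv, conj_val hv]
    intro a b c
    exact a (fun X hX => c X (List.mem_append_left _ hX))
      (b fun X hX => c X (List.mem_append_right _ hX))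

theorem MC.ded {Γ : Set MF} {A B : MF} (h : MC (insert A Γ) B) : MC Γ (A.imp B) := by
  classical
  obtain ⟨l, hl, h⟩ := h
  refine ⟨l.filter (· ≠ A), ?_, Prv.mp (Prv.taut fun v hv => ?_) h⟩
  · intro X hX
    simp at hX
    rcases hl X hX.1 with h | h
    · exact absurd h hX.2
    · exact h
  · simp only [val_imp hv, conj_val hv]
    intro a b c
    apply a
    intro X hX
    by_cases e : X = A
    · rwa [e]
    · exact b X (by simp [hX, e])

theorem mp2 {A B C : MF} (h : ∀ v : MF → Bool, MF.Respects v → v A = true → v B = true → v C = true)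
    (h1 : Prv AxGL A) (h2 : Prv AxGL B) : Prv AxGL C :=
  Prv.mp (Prv.mp (Prv.taut fun v hv => by simp only [val_imp hv]; exact h v hv) h1) h2

theorem tr {A B C : MF} (h1 : Prv AxGL (A.imp B)) (h2 : Prv AxGL (B.imp C)) :
    Prv AxGL (A.imp C) :=
  mp2 (fun v hv => by simp only [val_imp hv]; tauto) h1 h2

theorem boxmono {A B : MF} (h : Prv AxGL (A.imp B)) : Prv AxGL (A.box.imp B.box) :=
  Prv.mp Prv.axK (Prv.nec h)

theorem loeb (A : MF) : Prv AxGL ((MF.box (A.box.imp A)).imp A.box) := Prv.extra ⟨A, rfl⟩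

theorem four (A : MF) : Prv AxGL (A.box.imp A.box.box) := by
  have a : Prv AxGL ((A.and A.box).box.imp A.box) :=
    boxmono (Prv.taut fun v hv => by simp only [val_imp hv, val_and hv]; tauto)
  have b : Prv AxGL ((A.and A.box).box.imp A.box.box) :=
    boxmono (Prv.taut fun v hv => by simp only [val_imp hv, val_and hv]; tauto)
  have c : Prv AxGL (A.imp ((A.and A.box).box.imp (A.and A.box))) :=
    Prv.mp (Prv.taut fun v hv => by simp only [val_imp hv, val_and hv]; tauto) a
  exact tr (tr (boxmono c) (loeb _)) b

theorem boxand (A B : MF) : Prv AxGL (A.box.imp (B.box.imp (A.and B).box)) :=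
  tr (boxmono (B := B.imp (A.and B))
    (Prv.taut fun v hv => by simp only [val_imp hv, val_and hv]; tauto)) Prv.axK

theorem bhk_box : ∀ A : PF, Prv AxGL ((bhk A).imp (bhk A).box)
  | .atom n => four _
  | .bot => four _
  | .imp A B => four _
  | .and A B => by
    have h := boxand (bhk A) (bhk B)
    refine Prv.mp (mp2 (fun v hv => ?_) (bhk_box A) (bhk_box B)) h
    simp only [bhk, val_imp hv, val_and hv]; tauto
  | .or A B => by
    have a : Prv AxGL ((bhk A).box.imp (bhk (A.or B)).box) :=
      boxmono (Prv.taut fun v hv => by simp only [bhk, val_imp hv, val_or hv]; tauto)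
    have b : Prv AxGL ((bhk B).box.imp (bhk (A.or B)).box) :=
      boxmono (Prv.taut fun v hv => by simp only [bhk, val_imp hv, val_or hv]; tauto)
    refine mp2 (fun v hv => ?_) (tr (bhk_box A) a) (tr (bhk_box B) b)
    simp only [bhk, val_imp hv, val_or hv]; tauto

theorem bhk_ef : ∀ A : PF, Prv AxGL (MF.bot.box.imp (bhk A))
  | .atom n => boxmono (Prv.taut fun v hv => by have := val_bot hv; simp only [val_imp hv]; tauto)
  | .bot => Prv.taut fun v hv => by simp only [bhk, val_imp hv]; tauto
  | .imp A B => boxmono (Prv.taut fun v hv => by have := val_bot hv; simp only [val_imp hv]; tauto)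
  | .and A B => mp2 (fun v hv => by simp only [bhk, val_imp hv, val_and hv]; tauto)
      (bhk_ef A) (bhk_ef B)
  | .or A B => mp2 (fun v hv => by simp only [bhk, val_imp hv, val_or hv]; tauto)
      (bhk_ef A) (bhk_ef B)

theorem conj_box (l : List MF) (hl : ∀ B ∈ l, Prv AxGL (B.imp B.box)) :
    Prv AxGL ((conjL l).imp (conjL l).box) := by
  induction l with
  | nil =>
    have : Prv AxGL (conjL []).box :=
      Prv.nec (Prv.taut fun v hv => by rw [conj_val hv]; simp)
    exact Prv.mp (Prv.taut fun v hv => by simp only [val_imp hv]; tauto) this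
  | cons a l ih =>
    have i := ih fun B hB => hl B (by simp [hB])
    have e : conjL (a :: l) = a.and (conjL l) := rfl
    rw [e]
    refine Prv.mp (mp2 (fun v hv => ?_) (hl a (by simp)) i) (boxand a (conjL l))
    simp only [val_imp hv, val_and hv]; tauto

theorem MC.box {Γ : Set MF} {A : MF} (hΓ : ∀ B ∈ Γ, Prv AxGL (B.imp B.box)) (h : MC Γ A) :
    MC Γ A.box := by
  obtain ⟨l, hl, h⟩ := h
  exact ⟨l, hl, tr (conj_box l fun B hB => hΓ B (hl B hB)) (boxmono h)⟩

theorem MC.app1 {Γ : Set MF} {A B : MF} (h : Prv AxGL (A.imp B)) (h1 : MC Γ A) : MC Γ B :=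
  MC.mp (MC.thm h) h1
theorem MC.app2 {Γ : Set MF} {A B C : MF} (h : Prv AxGL (A.imp (B.imp C)))
    (h1 : MC Γ A) (h2 : MC Γ B) : MC Γ C :=
  MC.mp (MC.app1 h h1) h2

theorem box2 {A B C : MF} (h : ∀ v : MF → Bool, MF.Respects v → v A = true → v B = true → v C = true) :
    Prv AxGL (A.box.imp (B.box.imp C.box)) :=
  tr (boxmono (B := B.imp C) (Prv.taut fun v hv => by simp only [val_imp hv]; exact h v hv)) Prv.axK

theorem sound {Γ : Set PF} {A : PF} (h : FPL Γ A) : MC (bhk '' Γ) (bhk A) := by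
  induction h with
  | hyp h => exact MC.hyp ⟨_, h, rfl⟩
  | andI _ _ h1 h2 =>
    exact MC.app2 (Prv.taut fun v hv => by simp only [bhk, val_imp hv, val_and hv]; tauto) h1 h2
  | andE1 _ h =>
    exact MC.app1 (Prv.taut fun v hv => by simp only [bhk, val_imp hv, val_and hv]; tauto) h
  | andE2 _ h =>
    exact MC.app1 (Prv.taut fun v hv => by simp only [bhk, val_imp hv, val_and hv]; tauto) h
  | orI1 _ h =>
    exact MC.app1 (Prv.taut fun v hv => by simp only [bhk, val_imp hv, val_or hv]; tauto) h
  | orI2 _ h =>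
    exact MC.app1 (Prv.taut fun v hv => by simp only [bhk, val_imp hv, val_or hv]; tauto) h
  | orE _ _ _ h h1 h2 =>
    rw [Set.image_insert_eq] at h1 h2
    refine MC.mp (MC.app2 (Prv.taut fun v hv => ?_) h1.ded h2.ded) h
    simp only [bhk, val_imp hv, val_or hv]; tauto
  | impI _ h =>
    rw [Set.image_insert_eq] at h
    refine MC.box ?_ h.ded
    rintro _ ⟨B, _, rfl⟩
    exact bhk_box B
  | exfalso _ _ h => exact MC.app1 (bhk_ef _) h
  | fAndI _ _ h1 h2 =>
    exact MC.app2 (box2 fun v hv => by simp only [bhk, val_imp hv, val_and hv]; tauto) h1 h2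
  | fOrE _ _ h1 h2 =>
    exact MC.app2 (box2 fun v hv => by simp only [bhk, val_imp hv, val_or hv]; tauto) h1 h2
  | fTr _ _ h1 h2 =>
    exact MC.app2 (box2 fun v hv => by simp only [val_imp hv]; tauto) h1 h2
  | extra hr _ h =>
    obtain ⟨A, B, rfl, rfl⟩ := hr
    have h := h _ (List.mem_singleton.2 rfl)
    refine MC.app1 (tr (boxmono (Prv.taut fun v hv => ?_)) (loeb _)) h
    simp only [bhk, val_imp hv, val_and hv]; tauto

/-! #### Kripke soundness for GL -/

theorem ksound {W : Type} (R : W → W → Prop) (V : ℕ → W → Prop)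
    (ht : ∀ a b c, R a b → R b c → R a c) (hw : WellFounded (fun a b => R b a))
    {A : MF} (h : Prv AxGL A) : ∀ w, Forces R V w A := by
  classical
  induction h with
  | taut h =>
    intro w
    have := h (fun X => decide (Forces R V w X))
      ⟨decide_eq_false (fun h => h),
        fun A B => by rw [Bool.eq_iff_iff, Bool.and_eq_true]; simp only [decide_eq_true_eq]; rfl,
        fun A B => by rw [Bool.eq_iff_iff, Bool.or_eq_true]; simp only [decide_eq_true_eq]; rfl,
        fun A B => by
          rw [Bool.eq_iff_iff, Bool.or_eq_true, Bool.not_eq_true']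
          simp only [decide_eq_true_eq, decide_eq_false_iff_not]
          exact imp_iff_not_or,
        fun A => by
          rw [Bool.eq_iff_iff, Bool.not_eq_true']
          simp only [decide_eq_true_eq, decide_eq_false_iff_not]
          rfl⟩
    simpa using this
  | axK => intro w h1 h2 u hu; exact h1 u hu (h2 u hu)
  | extra h =>
    obtain ⟨B, rfl⟩ := h
    intro w h u
    induction u using hw.induction with
    | _ u ih => exact fun hu => h u hu fun x hx => ih x hx (ht _ _ _ hu hx)
  | mp _ _ h1 h2 => exact fun w => h1 w (h2 w)
  | nec _ h => exact fun w u _ => h u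

/-! #### FPL metatheory -/

theorem subst {Γ : Set PF} {A : PF} (h : FPL Γ A) :
    ∀ {Δ : Set PF}, (∀ X ∈ Γ, ∀ Θ : Set PF, Δ ⊆ Θ → FPL Θ X) → FPL Δ A := by
  have key : ∀ {Γ Δ : Set PF} (B : PF), (∀ X ∈ Γ, ∀ Θ : Set PF, Δ ⊆ Θ → FPL Θ X) →
      ∀ X ∈ insert B Γ, ∀ Θ : Set PF, insert B Δ ⊆ Θ → FPL Θ X := by
    intro Γ Δ B h X hX Θ hΘ
    rcases hX with rfl | hX
    · exact Deriv.hyp (hΘ (Set.mem_insert _ _))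
    · exact h X hX Θ ((Set.subset_insert _ _).trans hΘ)
  induction h with
  | hyp h => exact fun H => H _ h _ subset_rfl
  | andI _ _ h1 h2 => exact fun H => Deriv.andI (h1 H) (h2 H)
  | andE1 _ h => exact fun H => Deriv.andE1 (h H)
  | andE2 _ h => exact fun H => Deriv.andE2 (h H)
  | orI1 _ h => exact fun H => Deriv.orI1 (h H)
  | orI2 _ h => exact fun H => Deriv.orI2 (h H)
  | orE _ _ _ h h1 h2 => exact fun H => Deriv.orE (h H) (h1 (key _ H)) (h2 (key _ H))
  | impI _ h => exact fun H => Deriv.impI (h (key _ H))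
  | exfalso e _ h => exact fun H => Deriv.exfalso e (h H)
  | fAndI _ _ h1 h2 => exact fun H => Deriv.fAndI (h1 H) (h2 H)
  | fOrE _ _ h1 h2 => exact fun H => Deriv.fOrE (h1 H) (h2 H)
  | fTr _ _ h1 h2 => exact fun H => Deriv.fTr (h1 H) (h2 H)
  | extra r _ h => exact fun H => Deriv.extra r fun p hp => h p hp H

theorem weak {Γ Δ : Set PF} {A : PF} (h : FPL Γ A) (hs : Γ ⊆ Δ) : FPL Δ A :=
  subst h fun _ hX _ hΘ => Deriv.hyp (hΘ (hs hX))

theorem cut {Γ Δ : Set PF} {A : PF} (h : FPL Γ A) (hs : ∀ X ∈ Γ, FPL Δ X) : FPL Δ A :=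
  subst h fun X hX _ hΘ => weak (hs X hX) hΘ

/-- `G` represents the set `U`. -/
def Rep (U : Set PF) (G : PF) : Prop := FPL U G ∧ ∀ X ∈ U, FPL {G} X

theorem rep_insert {U : Set PF} {G : PF} (h : Rep U G) (C : PF) :
    Rep (insert C U) (G.and C) := by
  refine ⟨Deriv.andI (weak h.1 (Set.subset_insert _ _)) (Deriv.hyp (Set.mem_insert _ _)), ?_⟩
  rintro X (rfl | hX)
  · exact Deriv.andE2 (Deriv.hyp (A := G.and X) rfl)
  · refine cut (h.2 X hX) ?_
    rintro Y rfl
    exact Deriv.andE1 (Deriv.hyp (A := Y.and C) rfl)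

theorem exists_rep {U : Set PF} (hU : U.Finite) : ∃ G, Rep U G := by
  induction U, hU using Set.Finite.induction_on with
  | empty => exact ⟨PF.top, Deriv.impI (Deriv.hyp (Set.mem_insert _ _)), by simp⟩
  | insert _ _ ih => obtain ⟨G, h⟩ := ih; exact ⟨_, rep_insert h _⟩

/-- from `{G} ⊢ C` get `T ⊢ G → C`. -/
theorem imp1 {T : Set PF} {G C : PF} (h : FPL {G} C) : FPL T (G.imp C) :=
  Deriv.impI (weak h (by simp))

theorem rep_der {U : Set PF} {G C : PF} (h : Rep U G) (hC : FPL U C) : FPL {G} C := cut hC h.2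

/-- Relative entailment. -/
def Ent (T U : Set PF) (C : PF) : Prop := ∃ P, FPL U P ∧ FPL T (P.imp C)

theorem ent_rep {T U : Set PF} {G C : PF} (h : Rep U G) (hE : Ent T U C) : FPL T (G.imp C) := by
  obtain ⟨P, h1, h2⟩ := hE
  exact Deriv.fTr (imp1 (rep_der h h1)) h2

theorem ent_of {T U : Set PF} {C : PF} (h : FPL U C) : Ent T U C :=
  ⟨C, h, imp1 (Deriv.hyp rfl)⟩

theorem ent_cut {T U : Set PF} {C B : PF} (hU : U.Finite) (h1 : Ent T U C)
    (h2 : Ent T (insert C U) B) : Ent T U B := by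
  obtain ⟨G, hG⟩ := exists_rep hU
  refine ⟨G, hG.1, ?_⟩
  exact Deriv.fTr (Deriv.fAndI (imp1 (Deriv.hyp rfl)) (ent_rep hG h1))
    (ent_rep (rep_insert hG C) h2)

theorem ent_or {T U : Set PF} {C D B : PF} (hU : U.Finite) (h1 : Ent T (insert C U) B)
    (h2 : Ent T (insert D U) B) : Ent T (insert (C.or D) U) B := by
  obtain ⟨G, hG⟩ := exists_rep hU
  have h1 := ent_rep (rep_insert hG C) h1
  have h2 := ent_rep (rep_insert hG D) h2
  refine ⟨_, ?_, Deriv.fOrE h1 h2⟩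
  refine Deriv.orE (A := C) (B := D) (Deriv.hyp (Set.mem_insert _ _)) (Deriv.orI1 ?_) (Deriv.orI2 ?_)
  · refine Deriv.andI (weak hG.1 ?_) (Deriv.hyp (Set.mem_insert _ _))
    exact (Set.subset_insert _ _).trans (Set.subset_insert _ _)
  · refine Deriv.andI (weak hG.1 ?_) (Deriv.hyp (Set.mem_insert _ _))
    exact (Set.subset_insert _ _).trans (Set.subset_insert _ _)

structure IsWorld (S T : Set PF) : Prop where
  sub : T ⊆ S
  closed : ∀ C ∈ S, FPL T C → C ∈ T
  prime : ∀ C D, C ∈ S → D ∈ S → C.or D ∈ T → C ∈ T ∨ D ∈ T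
  cons : PF.bot ∉ T

theorem lind {S : Set PF} (hS : S.Finite) (E : Set PF → PF → Prop)
    (hd : ∀ U C, FPL U C → E U C)
    (hcut : ∀ U C B, U.Finite → E U C → E (insert C U) B → E U B)
    (hor : ∀ U C D B, U.Finite → E (insert C U) B → E (insert D U) B → E (insert (C.or D) U) B)
    {U₀ : Set PF} (h0 : U₀ ⊆ S) {B : PF} (hB : ¬ E U₀ B) :
    ∃ U, U₀ ⊆ U ∧ IsWorld S U ∧ (∀ C ∈ S, E U C → C ∈ U) ∧ B ∉ U := by
  have hfin : {U | U₀ ⊆ U ∧ U ⊆ S ∧ ¬ E U B}.Finite :=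
    hS.finite_subsets.subset fun U hU => hU.2.1
  obtain ⟨U, hU⟩ := hfin.exists_maximal ⟨U₀, subset_rfl, h0, hB⟩
  obtain ⟨hU0, hUS, hUB⟩ := hU.prop
  have hUf := hS.subset hUS
  have hmax : ∀ C ∈ S, C ∉ U → E (insert C U) B := by
    intro C hC hCU
    by_contra hn
    exact hCU (hU.le_of_ge (y := insert C U) ⟨hU0.trans (Set.subset_insert _ _),
      Set.insert_subset hC hUS, hn⟩ (Set.subset_insert _ _) (Set.mem_insert _ _))
  have hcl : ∀ C ∈ S, E U C → C ∈ U := by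
    intro C hC hE
    by_contra hn
    exact hUB (hcut _ _ _ hUf hE (hmax C hC hn))
  refine ⟨U, hU0, ⟨hUS, fun C hC h => hcl C hC (hd _ _ h), ?_, ?_⟩, hcl, ?_⟩
  · intro C D hC hD hCD
    by_contra! hn
    have := hor _ _ _ _ hUf (hmax C hC hn.1) (hmax D hD hn.2)
    rw [Set.insert_eq_of_mem hCD] at this
    exact hUB this
  · exact fun h => hUB (hd _ _ (Deriv.exfalso trivial (Deriv.hyp h)))
  · exact fun h => hUB (hd _ _ (Deriv.hyp h))

/-! #### Countermodel -/

def subf : PF → Set PF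
  | .atom n => {.atom n}
  | .bot => {.bot}
  | .and A B => insert (.and A B) (subf A ∪ subf B)
  | .or A B => insert (.or A B) (subf A ∪ subf B)
  | .imp A B => insert (.imp A B) (subf A ∪ subf B)

theorem subf_fin : ∀ A, (subf A).Finite
  | .atom n => Set.finite_singleton _
  | .bot => Set.finite_singleton _
  | .and A B => ((subf_fin A).union (subf_fin B)).insert _
  | .or A B => ((subf_fin A).union (subf_fin B)).insert _
  | .imp A B => ((subf_fin A).union (subf_fin B)).insert _

theorem subf_self (A : PF) : A ∈ subf A := by
  cases A <;> simp [subf]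

theorem subf_trans {X A : PF} (h : X ∈ subf A) : subf X ⊆ subf A := by
  induction A with
  | atom n => simp [subf] at h; subst h; exact subset_rfl
  | bot => simp [subf] at h; subst h; exact subset_rfl
  | and A B ih1 ih2 | or A B ih1 ih2 | imp A B ih1 ih2 =>
    rcases h with rfl | h | h
    · exact subset_rfl
    · exact (ih1 h).trans (Set.subset_union_left.trans (Set.subset_insert _ _))
    · exact (ih2 h).trans (Set.subset_union_right.trans (Set.subset_insert _ _))

def MW (S : Set PF) : Type := {T : Set PF // IsWorld S T} × Bool

def MR (S : Set PF) (a b : MW S) : Prop :=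
  a.2 = false ∧ a.1.1 ⊆ b.1.1 ∧ (b.2 = false → a.1.1 ≠ b.1.1 ∧
    ∀ C D, C.imp D ∈ a.1.1 → C ∈ b.1.1 → D ∈ b.1.1)

def MV (S : Set PF) (n : ℕ) (a : MW S) : Prop := PF.atom n ∈ a.1.1

theorem MR_trans {S : Set PF} (a b c : MW S) (h1 : MR S a b) (h2 : MR S b c) : MR S a c := by
  refine ⟨h1.1, h1.2.1.trans h2.2.1, fun hc => ⟨?_, ?_⟩⟩
  · intro e
    exact (h1.2.2 h2.1).1 (h1.2.1.antisymm (e ▸ h2.2.1))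
  · exact fun C D h hC => (h2.2.2 hc).2 C D (h1.2.1 h) hC

theorem MR_wf {S : Set PF} (hS : S.Finite) : WellFounded (fun a b : MW S => MR S b a) := by
  let f : MW S → ℕ := fun a => if a.2 = true then 0 else (S \ a.1.1).ncard + 1
  refine Subrelation.wf (r := fun a b => f a < f b) ?_ (InvImage.wf f wellFounded_lt)
  intro a b h
  obtain ⟨h1, h2, h3⟩ := h
  show f a < f b
  cases ha : a.2
  · simp only [f, ha, h1]
    have h4 : b.1.1 ⊂ a.1.1 := h2.ssubset_of_ne (h3 ha).1
    have : (S \ a.1.1).ncard < (S \ b.1.1).ncard := by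
      apply Set.ncard_lt_ncard _ hS.diff
      obtain ⟨x, hx, hxb⟩ := Set.exists_of_ssubset h4
      refine Set.ssubset_iff_exists.2 ⟨Set.diff_subset_diff_right h2, x, ⟨a.1.2.sub hx, hxb⟩, ?_⟩
      exact fun h => h.2 hx
    simpa using this
  · simp [f, ha, h1]

theorem star {S : Set PF} (a : MW S) (ha : a.2 = true) :
    ∀ A, Forces (MR S) (MV S) a (bhk A) := by
  have key : ∀ X : MF, Forces (MR S) (MV S) a X.box := by
    intro X u hu
    have := hu.1
    simp [ha] at this
  intro A
  induction A with
  | atom n => exact key _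
  | bot => exact key _
  | and A B h1 h2 => exact ⟨h1, h2⟩
  | or A B h1 h2 => exact Or.inl h1
  | imp A B _ _ => exact key _

theorem truth {S : Set PF} (hS : S.Finite) (hc : ∀ X ∈ S, subf X ⊆ S) :
    ∀ A ∈ S, ∀ a : MW S, a.2 = false → (Forces (MR S) (MV S) a (bhk A) ↔ A ∈ a.1.1) := by
  intro A
  induction A with
  | atom n =>
    intro hA a ha
    constructor
    · intro h
      exact h (a.1, true) ⟨ha, subset_rfl, by simp⟩
    · intro h u hu
      exact hu.2.1 h
  | bot =>
    intro hA a ha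
    constructor
    · intro h
      exact (h (a.1, true) ⟨ha, subset_rfl, by simp⟩).elim
    · intro h
      exact (a.1.2.cons h).elim
  | and A B ih1 ih2 =>
    intro hA a ha
    have hA1 : A ∈ S := hc _ hA (by simp [subf, subf_self])
    have hB1 : B ∈ S := hc _ hA (by simp [subf, subf_self])
    show (_ ∧ _) ↔ _
    rw [ih1 hA1 a ha, ih2 hB1 a ha]
    constructor
    · rintro ⟨h1, h2⟩
      exact a.1.2.closed _ hA (Deriv.andI (Deriv.hyp h1) (Deriv.hyp h2))
    · intro h
      exact ⟨a.1.2.closed _ hA1 (Deriv.andE1 (Deriv.hyp h)),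
        a.1.2.closed _ hB1 (Deriv.andE2 (Deriv.hyp h))⟩
  | or A B ih1 ih2 =>
    intro hA a ha
    have hA1 : A ∈ S := hc _ hA (by simp [subf, subf_self])
    have hB1 : B ∈ S := hc _ hA (by simp [subf, subf_self])
    show (_ ∨ _) ↔ _
    rw [ih1 hA1 a ha, ih2 hB1 a ha]
    constructor
    · rintro (h | h)
      · exact a.1.2.closed _ hA (Deriv.orI1 (Deriv.hyp h))
      · exact a.1.2.closed _ hA (Deriv.orI2 (Deriv.hyp h))
    · exact a.1.2.prime _ _ hA1 hB1
  | imp A B ih1 ih2 =>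
    intro hA a ha
    have hA1 : A ∈ S := hc _ hA (by simp [subf, subf_self])
    have hB1 : B ∈ S := hc _ hA (by simp [subf, subf_self])
    constructor
    · intro h
      by_contra hn
      have hnd : ¬ FPL a.1.1 ((A.and (A.imp B)).imp B) := by
        intro hd
        refine hn (a.1.2.closed _ hA (Deriv.extra ⟨A, B, rfl, rfl⟩ ?_))
        intro p hp
        rw [List.mem_singleton.1 hp]
        exact hd
      have hne : ¬ Ent a.1.1 (insert A (insert (A.imp B) a.1.1)) B := by
        rintro ⟨P, h1, h2⟩
        apply hnd
        refine Deriv.fTr (Deriv.impI (cut h1 ?_)) h2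
        have hh : FPL (insert (A.and (A.imp B)) a.1.1) (A.and (A.imp B)) :=
          Deriv.hyp (Set.mem_insert _ _)
        rintro X (rfl | rfl | hX)
        · exact Deriv.andE1 hh
        · exact Deriv.andE2 hh
        · exact Deriv.hyp (Set.mem_insert_of_mem _ hX)
      obtain ⟨U, hU0, hUw, hUc, hUB⟩ := lind hS (Ent a.1.1) (fun _ _ => ent_of)
        (fun _ _ _ => ent_cut) (fun _ _ _ _ => ent_or)
        (Set.insert_subset hA1 (Set.insert_subset hA a.1.2.sub)) hne
      have hAU : A ∈ U := hU0 (by simp)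
      have hABU : A.imp B ∈ U := hU0 (by simp)
      have haU : a.1.1 ⊆ U := fun x hx => hU0 (by simp [hx])
      let u : MW S := (⟨U, hUw⟩, false)
      have hu : MR S a u := by
        refine ⟨ha, haU, fun _ => ⟨?_, ?_⟩⟩
        · intro e
          apply hn
          rw [e]
          exact hABU
        · intro C D hCD hC
          refine hUc D (hc _ (a.1.2.sub hCD) (by simp [subf, subf_self])) ?_
          exact ⟨C, Deriv.hyp hC, Deriv.hyp hCD⟩
      exact hUB ((ih2 hB1 u rfl).1 (h u hu ((ih1 hA1 u rfl).2 hAU)))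
    · intro h u hu hfA
      cases hu2 : u.2
      · rw [ih1 hA1 u hu2] at hfA
        exact (ih2 hB1 u hu2).2 ((hu.2.2 hu2).2 _ _ h hfA)
      · exact star u hu2 B

theorem complete {Γ : Set PF} (hΓ : Γ.Finite) {A : PF}
    (h : ∀ (W : Type) (R : W → W → Prop) (V : ℕ → W → Prop), (∀ a b c, R a b → R b c → R a c) →
      WellFounded (fun a b => R b a) → ∀ w, (∀ B ∈ Γ, Forces R V w (bhk B)) →
      Forces R V w (bhk A)) : FPL Γ A := by
  by_contra hn
  let S : Set PF := ⋃ X ∈ insert A Γ, subf X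
  have hS : S.Finite := (hΓ.insert A).biUnion fun X _ => subf_fin X
  have hmem : ∀ X ∈ insert A Γ, X ∈ S := fun X hX => Set.mem_biUnion hX (subf_self X)
  have hc : ∀ X ∈ S, subf X ⊆ S := by
    intro X hX
    obtain ⟨Y, hY, hXY⟩ := Set.mem_iUnion₂.1 hX
    exact (subf_trans hXY).trans (Set.subset_biUnion_of_mem (u := subf) hY)
  have hΓS : Γ ⊆ S := fun X hX => hmem X (Set.mem_insert_of_mem _ hX)
  obtain ⟨U, hU0, hUw, -, hUA⟩ := lind hS (FPL) (fun _ _ h => h)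
    (fun U C B _ h1 h2 => cut h2 (by
      rintro X (rfl | hX)
      · exact h1
      · exact Deriv.hyp hX))
    (fun U C D B _ h1 h2 => Deriv.orE (A := C) (B := D) (Deriv.hyp (Set.mem_insert _ _))
      (weak h1 (Set.insert_subset_insert (Set.subset_insert _ _)))
      (weak h2 (Set.insert_subset_insert (Set.subset_insert _ _))))
    hΓS hn
  let u : MW S := (⟨U, hUw⟩, false)
  have := h (MW S) (MR S) (MV S) MR_trans (MR_wf hS) u
    (fun B hB => (truth hS hc B (hΓS hB) u rfl).2 (hU0 hB))
  exact hUA ((truth hS hc A (hmem A (Set.mem_insert _ _)) u rfl).1 this)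

theorem forces_conj {W : Type} (R : W → W → Prop) (V : ℕ → W → Prop) (w : W) (l : List MF)
    (h : ∀ B ∈ l, Forces R V w B) : Forces R V w (conjL l) := by
  induction l with
  | nil => exact fun h => h
  | cons a l ih => exact ⟨h a (by simp), ih fun B hB => h B (by simp [hB])⟩

theorem main (Γ : Set PF) (A : PF) : FPL Γ A ↔ ModalConseq AxGL (bhk '' Γ) (bhk A) := by
  refine ⟨sound, ?_⟩
  rintro ⟨l, hl, h⟩
  haveI : Nonempty PF := ⟨PF.bot⟩
  choose! g hg using hl
  have hfin : (g '' {B | B ∈ l}).Finite := (List.finite_toSet l).image g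
  refine weak (Γ := g '' {B | B ∈ l}) (complete hfin ?_) ?_
  · intro W R V ht hw w hB
    refine ksound R V ht hw h w (forces_conj R V w l fun B hBl => ?_)
    have := hB (g B) ⟨B, hBl, rfl⟩
    rwa [(hg B hBl).2] at this
  · rintro _ ⟨B, hB, rfl⟩
    exact (hg B hB).1

end S6

-- STATEMENT 6
theorem stmt6 (Γ : Set PF) (A : PF) :
    FPL Γ A ↔ ModalConseq AxGL (bhk '' Γ) (bhk A) := by
  exact S6.main Γ A
end

section
/- For every set Γ of propositional formulas and every propositional formula A: Γ ⊢_MPC A if and only if Γ^w ⊢_S4 A^w. -/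
/-! ### Helper lemmas: modal side -/

theorem conjL_true {v : MF → Bool} (hv : MF.Respects v) (l : List MF) :
    v (conjL l) = true ↔ ∀ B ∈ l, v B = true := by
  obtain ⟨h0, h1, h2, h3, h4⟩ := hv
  induction l with
  | nil => simp [conjL, h3, h0]
  | cons a l ih =>
    have : conjL (a :: l) = MF.and a (conjL l) := rfl
    rw [this, h1]; simp [ih]

/-- Consequence closed under one-premise tautological steps. -/
theorem mc_taut1 {Ax : MF → Prop} {G : Set MF} {A C : MF} (h : ModalConseq Ax G A)
    (ht : ∀ v, MF.Respects v → v A = true → v C = true) : ModalConseq Ax G C := by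
  obtain ⟨l, hl, hp⟩ := h
  refine ⟨l, hl, Prv.mp (Prv.taut ?_) hp⟩
  intro v hv
  have := ht v hv
  obtain ⟨h0, h1, h2, h3, h4⟩ := hv
  simp only [h3]
  cases h : v (conjL l) <;> cases h' : v A <;> simp_all

theorem mc_taut2 {Ax : MF → Prop} {G : Set MF} {A B C : MF} (h : ModalConseq Ax G A)
    (h' : ModalConseq Ax G B)
    (ht : ∀ v, MF.Respects v → v A = true → v B = true → v C = true) : ModalConseq Ax G C := by
  obtain ⟨l, hl, hp⟩ := h
  obtain ⟨l', hl', hp'⟩ := h'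
  refine ⟨l ++ l', ?_, Prv.mp (Prv.mp (Prv.taut ?_) hp) hp'⟩
  · intro B hB
    rcases List.mem_append.1 hB with h | h
    · exact hl _ h
    · exact hl' _ h
  intro v hv
  have := ht v hv
  have e1 := conjL_true hv l
  have e2 := conjL_true hv l'
  have e3 := conjL_true hv (l ++ l')
  have e4 : v (conjL (l ++ l')) = true → v (conjL l) = true ∧ v (conjL l') = true := by
    intro h
    rw [e1, e2]
    rw [e3] at h
    exact ⟨fun B hB => h B (by simp [hB]), fun B hB => h B (by simp [hB])⟩
  obtain ⟨h0, h1, h2, h3, h4⟩ := hv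
  simp only [h3]
  cases h : v (conjL l) <;> cases h' : v A <;> cases h'' : v B <;> cases h''' : v (conjL l') <;>
    cases h5 : v (conjL (l ++ l')) <;> simp_all

theorem mc_prv {Ax : MF → Prop} {G : Set MF} {A : MF} (h : Prv Ax A) : ModalConseq Ax G A := by
  refine ⟨[], by simp, Prv.mp (Prv.taut ?_) h⟩
  rintro v ⟨h0, h1, h2, h3, h4⟩
  simp only [h3]
  cases h' : v A <;> simp

theorem mc_mp {Ax : MF → Prop} {G : Set MF} {A B : MF} (h : ModalConseq Ax G (A.imp B))
    (h' : ModalConseq Ax G A) : ModalConseq Ax G B := by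
  refine mc_taut2 h h' ?_
  rintro v ⟨h0, h1, h2, h3, h4⟩ a b
  simpa [h3, b] using a

theorem mc_hyp {Ax : MF → Prop} {G : Set MF} {A : MF} (h : A ∈ G) : ModalConseq Ax G A := by
  refine ⟨[A], by simpa using h, Prv.taut ?_⟩
  intro v hv
  have := (conjL_true hv [A]).1
  obtain ⟨h0, h1, h2, h3, h4⟩ := hv
  simp only [h3]
  cases h' : v (conjL [A]) <;> simp_all

theorem mc_ded {Ax : MF → Prop} {G : Set MF} {A B : MF} (h : ModalConseq Ax (insert A G) B) :
    ModalConseq Ax G (A.imp B) := by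
  obtain ⟨l, hl, hp⟩ := h
  refine ⟨l.filter (fun x => x ≠ A), ?_, Prv.mp (Prv.taut ?_) hp⟩
  · intro C hC
    simp only [List.mem_filter, decide_eq_true_eq] at hC
    exact (hl C hC.1).resolve_left hC.2
  intro v hv
  have e1 := conjL_true hv l
  have e2 := conjL_true hv (l.filter (fun x => x ≠ A))
  have e4 : v (conjL (l.filter (fun x => x ≠ A))) = true → v A = true → v (conjL l) = true := by
    intro h hA
    rw [e1]
    rw [e2] at h
    intro C hC
    by_cases hCA : C = A
    · rw [hCA, hA]
    · exact h C (by simp [hC, hCA])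
  clear e1 e2
  obtain ⟨h0, h1, h2, h3, h4⟩ := hv
  simp only [h3]
  generalize v (conjL (l.filter (fun x => x ≠ A))) = a at *
  generalize v (conjL l) = b at *
  cases a <;> cases b <;> cases h' : v A <;> cases h'' : v B <;> simp_all

theorem prv_box_mono {A B : MF} {Ax : MF → Prop} (h : Prv Ax (A.imp B)) :
    Prv Ax (A.box.imp B.box) := Prv.mp Prv.axK (Prv.nec h)

theorem prv_trans {Ax : MF → Prop} {A B C : MF} (h : Prv Ax (A.imp B)) (h' : Prv Ax (B.imp C)) :
    Prv Ax (A.imp C) := by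
  refine Prv.mp (Prv.mp (Prv.taut ?_) h) h'
  rintro v ⟨h0, h1, h2, h3, h4⟩
  simp only [h3]
  cases v A <;> cases v B <;> cases v C <;> rfl

theorem prv_andBox {Ax : MF → Prop} (A B : MF) :
    Prv Ax ((A.box.and B.box).imp (A.and B).box) := by
  have h1 : Prv Ax (A.box.imp (B.imp (A.and B)).box) := by
    refine prv_box_mono (Prv.taut ?_)
    rintro v ⟨h0, h1, h2, h3, h4⟩
    simp only [h3, h1]
    cases v A <;> cases v B <;> rfl
  have h2 : Prv Ax ((B.imp (A.and B)).box.imp (B.box.imp (A.and B).box)) := Prv.axK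
  refine Prv.mp (Prv.taut ?_) (prv_trans h1 h2)
  rintro v ⟨h0, h1, h2, h3, h4⟩
  simp only [h3, h1]
  cases v A.box <;> cases v B.box <;> cases v (A.and B).box <;> rfl

theorem prv_and_mono {Ax : MF → Prop} {A B C D : MF} (h : Prv Ax (A.imp C)) (h' : Prv Ax (B.imp D)) :
    Prv Ax ((A.and B).imp (C.and D)) := by
  refine Prv.mp (Prv.mp (Prv.taut ?_) h) h'
  rintro v ⟨h0, h1, h2, h3, h4⟩
  simp only [h3, h1]
  cases v A <;> cases v B <;> cases v C <;> cases v D <;> rfl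

theorem prv_or_elim {Ax : MF → Prop} {A B C : MF} (h : Prv Ax (A.imp C)) (h' : Prv Ax (B.imp C)) :
    Prv Ax ((A.or B).imp C) := by
  refine Prv.mp (Prv.mp (Prv.taut ?_) h) h'
  rintro v ⟨h0, h1, h2, h3, h4⟩
  simp only [h3, h2]
  cases v A <;> cases v B <;> cases v C <;> rfl

theorem prv_orI1 {Ax : MF → Prop} (A B : MF) : Prv Ax (A.imp (A.or B)) := by
  refine Prv.taut ?_
  rintro v ⟨h0, h1, h2, h3, h4⟩
  simp only [h3, h2]
  cases v A <;> cases v B <;> rfl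

theorem prv_orI2 {Ax : MF → Prop} (A B : MF) : Prv Ax (B.imp (A.or B)) := by
  refine Prv.taut ?_
  rintro v ⟨h0, h1, h2, h3, h4⟩
  simp only [h3, h2]
  cases v A <;> cases v B <;> rfl

theorem prv_four (A : MF) : Prv AxS4 (A.box.imp A.box.box) := Prv.extra (Or.inl ⟨A, rfl⟩)
theorem prv_T (A : MF) : Prv AxS4 (A.box.imp A) := Prv.extra (Or.inr ⟨A, rfl⟩)

theorem wtr_box (A : PF) : Prv AxS4 ((wtr A).imp (wtr A).box) := by
  induction A with
  | atom n => exact prv_four _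
  | bot => exact prv_four _
  | imp A B _ _ => exact prv_four _
  | and A B ihA ihB => exact prv_trans (prv_and_mono ihA ihB) (prv_andBox _ _)
  | or A B ihA ihB =>
    exact prv_or_elim (prv_trans ihA (prv_box_mono (prv_orI1 _ _)))
      (prv_trans ihB (prv_box_mono (prv_orI2 _ _)))

theorem conjL_box (l : List MF) (hl : ∀ B ∈ l, Prv AxS4 (B.imp B.box)) :
    Prv AxS4 ((conjL l).imp (conjL l).box) := by
  induction l with
  | nil =>
    have h : Prv AxS4 (MF.imp MF.bot MF.bot) := by
      refine Prv.taut ?_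
      rintro v ⟨h0, h1, h2, h3, h4⟩
      simp [h3, h0]
    refine Prv.mp (Prv.taut ?_) (Prv.nec h)
    rintro v ⟨h0, h1, h2, h3, h4⟩
    simp only [conjL, List.foldr, h3, h0]
    simp
  | cons a l ih =>
    exact prv_trans (prv_and_mono (hl a (by simp)) (ih fun B hB => hl B (by simp [hB])))
      (prv_andBox _ _)

theorem mc_nec {Γ : Set PF} {A : MF} (h : ModalConseq AxS4 (wtr '' Γ) A) :
    ModalConseq AxS4 (wtr '' Γ) A.box := by
  obtain ⟨l, hl, hp⟩ := h
  refine ⟨l, hl, prv_trans (conjL_box l ?_) (prv_box_mono hp)⟩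
  intro B hB
  obtain ⟨C, _, rfl⟩ := hl B hB
  exact wtr_box C

theorem mc_unbox {G : Set MF} {A : MF} (h : ModalConseq AxS4 G A.box) : ModalConseq AxS4 G A :=
  mc_mp (mc_prv (prv_T A)) h

theorem mpc_to_s4 {Γ : Set PF} {A : PF} (h : Deriv False RuleR Γ A) :
    ModalConseq AxS4 (wtr '' Γ) (wtr A) := by
  induction h with
  | hyp h => exact mc_hyp ⟨_, h, rfl⟩
  | andI _ _ ih1 ih2 =>
    refine mc_taut2 ih1 ih2 ?_
    rintro v ⟨h0, h1, h2, h3, h4⟩ a b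
    simp [wtr, h1, a, b]
  | andE1 _ ih =>
    refine mc_taut1 ih ?_
    rintro v ⟨h0, h1, h2, h3, h4⟩ a
    simp [wtr, h1] at a
    exact a.1
  | andE2 _ ih =>
    refine mc_taut1 ih ?_
    rintro v ⟨h0, h1, h2, h3, h4⟩ a
    simp [wtr, h1] at a
    exact a.2
  | orI1 _ ih =>
    refine mc_taut1 ih ?_
    rintro v ⟨h0, h1, h2, h3, h4⟩ a
    simp [wtr, h2, a]
  | orI2 _ ih =>
    refine mc_taut1 ih ?_
    rintro v ⟨h0, h1, h2, h3, h4⟩ a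
    simp [wtr, h2, a]
  | orE _ _ _ ih ih1 ih2 =>
    rw [Set.image_insert_eq] at ih1 ih2
    refine mc_mp ?_ ih
    refine mc_taut2 (mc_ded ih1) (mc_ded ih2) ?_
    rintro v ⟨h0, h1, h2, h3, h4⟩ a b
    simp only [wtr, h2, h3] at *
    generalize v _ = x at *
    generalize v _ = y at *
    generalize v _ = z at *
    cases x <;> cases y <;> cases z <;> simp_all
  | impI _ ih =>
    rw [Set.image_insert_eq] at ih
    exact mc_nec (mc_ded ih)
  | exfalso h => exact h.elim
  | @fAndI Γ A B C _ _ ih1 ih2 =>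
    refine mc_nec (mc_taut2 (mc_unbox ih1) (mc_unbox ih2) ?_)
    rintro v ⟨h0, h1, h2, h3, h4⟩ a b
    simp only [wtr, h1, h3] at *
    cases h : v (wtr A) <;> simp_all
  | @fOrE Γ A B C _ _ ih1 ih2 =>
    refine mc_nec (mc_taut2 (mc_unbox ih1) (mc_unbox ih2) ?_)
    rintro v ⟨h0, h1, h2, h3, h4⟩ a b
    simp only [wtr, h2, h3] at *
    cases h : v (wtr C) <;> simp_all
  | @fTr Γ A B C _ _ ih1 ih2 =>
    refine mc_nec (mc_taut2 (mc_unbox ih1) (mc_unbox ih2) ?_)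
    rintro v ⟨h0, h1, h2, h3, h4⟩ a b
    simp only [h3] at *
    cases h : v (wtr B) <;> simp_all
  | @extra Γ' ps c hr _ ih =>
    obtain ⟨A, B, rfl, hc⟩ := hr
    subst hc
    exact mc_mp (mc_unbox (ih (A.imp c) (by simp))) (ih A (by simp))

/-! ### Soundness of S4 -/

theorem s4_sound {W : Type} {R : W → W → Prop} (hr : ∀ w, R w w)
    (ht : ∀ a b c, R a b → R b c → R a c) (V : ℕ → W → Prop) {A : MF} (h : Prv AxS4 A) :
    ∀ w, Forces R V w A := by
  classical
  induction h with
  | taut h =>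
    intro w
    have := h (fun C => decide (Forces R V w C)) ⟨?_, ?_, ?_, ?_, ?_⟩
    · simpa using this
    · exact decide_eq_false (fun h => h)
    all_goals
      intros
      rw [Bool.eq_iff_iff]
      simp only [Bool.and_eq_true, Bool.or_eq_true, decide_eq_true_iff, Bool.not_eq_true',
        decide_eq_false_iff_not]
      simp only [Forces, imp_iff_not_or]
  | axK => exact fun w h1 h2 u hu => h1 u hu (h2 u hu)
  | extra h =>
    rcases h with ⟨B, rfl⟩ | ⟨B, rfl⟩
    · exact fun w h1 u hu x hx => h1 x (ht _ _ _ hu hx)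
    · exact fun w h1 => h1 w (hr w)
  | mp _ _ ih1 ih2 => exact fun w => ih1 w (ih2 w)
  | nec _ ih => exact fun w u _ => ih u

theorem forces_conjL {W : Type} {R : W → W → Prop} {V : ℕ → W → Prop} {w : W} (l : List MF)
    (h : ∀ B ∈ l, Forces R V w B) : Forces R V w (conjL l) := by
  induction l with
  | nil => exact fun h => h
  | cons a l ih => exact ⟨h a (by simp), ih fun B hB => h B (by simp [hB])⟩

/-! ### Canonical model for MPC -/

theorem mpc_weak {Γ : Set PF} {A : PF} (h : Deriv False RuleR Γ A) :
    ∀ {Δ : Set PF}, Γ ⊆ Δ → Deriv False RuleR Δ A := by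
  induction h with
  | hyp h => exact fun hs => .hyp (hs h)
  | andI _ _ ih1 ih2 => exact fun hs => .andI (ih1 hs) (ih2 hs)
  | andE1 _ ih => exact fun hs => .andE1 (ih hs)
  | andE2 _ ih => exact fun hs => .andE2 (ih hs)
  | orI1 _ ih => exact fun hs => .orI1 (ih hs)
  | orI2 _ ih => exact fun hs => .orI2 (ih hs)
  | orE _ _ _ ih ih1 ih2 =>
    exact fun hs => .orE (ih hs) (ih1 (Set.insert_subset_insert hs)) (ih2 (Set.insert_subset_insert hs))
  | impI _ ih => exact fun hs => .impI (ih (Set.insert_subset_insert hs))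
  | exfalso h => exact h.elim
  | fAndI _ _ ih1 ih2 => exact fun hs => .fAndI (ih1 hs) (ih2 hs)
  | fOrE _ _ ih1 ih2 => exact fun hs => .fOrE (ih1 hs) (ih2 hs)
  | fTr _ _ ih1 ih2 => exact fun hs => .fTr (ih1 hs) (ih2 hs)
  | extra hr _ ih => exact fun hs => .extra hr fun p hp => ih p hp hs

theorem mpc_mp {Γ : Set PF} {A B : PF} (h : Deriv False RuleR Γ (A.imp B))
    (h' : Deriv False RuleR Γ A) : Deriv False RuleR Γ B := by
  refine .extra (ps := [A, A.imp B]) ⟨A, B, rfl, rfl⟩ ?_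
  intro p hp
  simp at hp
  rcases hp with rfl | rfl <;> assumption

theorem mpc_cpt {Γ : Set PF} {A : PF} (h : Deriv False RuleR Γ A) :
    ∃ F : Set PF, F.Finite ∧ F ⊆ Γ ∧ Deriv False RuleR F A := by
  have un : ∀ {Γ : Set PF} {A B C : PF},
      (∃ F : Set PF, F.Finite ∧ F ⊆ Γ ∧ Deriv False RuleR F A) →
      (∃ F : Set PF, F.Finite ∧ F ⊆ Γ ∧ Deriv False RuleR F B) →
      (∀ F, Deriv False RuleR F A → Deriv False RuleR F B → Deriv False RuleR F C) →
      (∃ F : Set PF, F.Finite ∧ F ⊆ Γ ∧ Deriv False RuleR F C) := by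
    rintro Γ A B C ⟨F, f1, f2, f3⟩ ⟨G, g1, g2, g3⟩ h
    exact ⟨F ∪ G, f1.union g1, Set.union_subset f2 g2,
      h _ (mpc_weak f3 Set.subset_union_left) (mpc_weak g3 Set.subset_union_right)⟩
  have ded : ∀ {Γ : Set PF} {A B : PF},
      (∃ F : Set PF, F.Finite ∧ F ⊆ insert A Γ ∧ Deriv False RuleR F B) →
      (∃ F : Set PF, F.Finite ∧ F ⊆ Γ ∧ Deriv False RuleR F (A.imp B)) := by
    rintro Γ A B ⟨F, f1, f2, f3⟩
    refine ⟨F \ {A}, f1.subset Set.sdiff_subset, ?_, .impI (mpc_weak f3 ?_)⟩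
    · rintro x ⟨hx, hx'⟩
      exact (f2 hx).resolve_left hx'
    · intro x hx
      by_cases h : x = A
      · exact Or.inl h
      · exact Or.inr ⟨hx, h⟩
  induction h with
  | @hyp Γ A h => exact ⟨{A}, Set.finite_singleton _, by simpa using h, .hyp rfl⟩
  | andI _ _ ih1 ih2 => exact un ih1 ih2 fun F a b => .andI a b
  | andE1 _ ih => exact un ih ih fun F a b => .andE1 a
  | andE2 _ ih => exact un ih ih fun F a b => .andE2 a
  | orI1 _ ih => exact un ih ih fun F a b => .orI1 a
  | orI2 _ ih => exact un ih ih fun F a b => .orI2 a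
  | orE _ _ _ ih ih1 ih2 =>
    exact un ih (un (ded ih1) (ded ih2) fun F a b => .fOrE a b) fun F a b => mpc_mp b a
  | impI _ ih => exact ded ih
  | exfalso h => exact h.elim
  | fAndI _ _ ih1 ih2 => exact un ih1 ih2 fun F a b => .fAndI a b
  | fOrE _ _ ih1 ih2 => exact un ih1 ih2 fun F a b => .fOrE a b
  | fTr _ _ ih1 ih2 => exact un ih1 ih2 fun F a b => .fTr a b
  | @extra Γ' ps c hr _ ih =>
    obtain ⟨A, B, rfl, hc⟩ := hr
    subst hc
    exact un (ih (A.imp c) (by simp)) (ih A (by simp)) fun F a b => mpc_mp a b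

/-- Prime theories of MPC. -/
def PrimeTh (T : Set PF) : Prop :=
  (∀ A, Deriv False RuleR T A → A ∈ T) ∧ (∀ A B, PF.or A B ∈ T → A ∈ T ∨ B ∈ T)

theorem mpc_lind {Γ : Set PF} {A : PF} (h : ¬ Deriv False RuleR Γ A) :
    ∃ T, Γ ⊆ T ∧ PrimeTh T ∧ A ∉ T := by
  obtain ⟨T, hT, hm⟩ := zorn_subset_nonempty {T : Set PF | ¬ Deriv False RuleR T A} (by
    intro c hc hch hne
    refine ⟨⋃₀ c, ?_, fun s hs => Set.subset_sUnion_of_mem hs⟩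
    intro hd
    obtain ⟨F, f1, f2, f3⟩ := mpc_cpt hd
    obtain ⟨t, ht, hFt⟩ := DirectedOn.exists_mem_subset_of_finite_of_subset_sUnion hne hch.directedOn f1 f2
    exact hc ht (mpc_weak f3 hFt)) Γ h
  have key : ∀ B, B ∉ T → Deriv False RuleR (insert B T) A := by
    intro B hB
    by_contra hn
    exact hB (hm.2 hn (Set.subset_insert B T) (Set.mem_insert B T))
  refine ⟨T, hT, ⟨?_, ?_⟩, fun hA => hm.1 (.hyp hA)⟩
  · intro B hB
    by_contra hn
    exact hm.1 (mpc_mp (.impI (key B hn)) hB)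
  · intro B C hBC
    by_contra hn
    push Not at hn
    exact hm.1 (.orE (.hyp hBC) (key B hn.1) (key C hn.2))

/-- Canonical valuation. -/
def canV : ℕ → {T : Set PF // PrimeTh T} → Prop
  | 0, T => PF.bot ∈ T.1
  | n+1, T => PF.atom n ∈ T.1

theorem truth (A : PF) : ∀ T : {T : Set PF // PrimeTh T},
    Forces (fun S T : {T : Set PF // PrimeTh T} => S.1 ⊆ T.1) canV T (wtr A) ↔ A ∈ T.1 := by
  induction A with
  | atom n => exact fun T => ⟨fun h => h T (fun _ h => h), fun h U hU => hU h⟩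
  | bot => exact fun T => ⟨fun h => h T (fun _ h => h), fun h U hU => hU h⟩
  | and A B ihA ihB =>
    intro T
    simp only [wtr, Forces, ihA, ihB]
    exact ⟨fun h => T.2.1 _ (.andI (.hyp h.1) (.hyp h.2)),
      fun h => ⟨T.2.1 _ (.andE1 (.hyp h)), T.2.1 _ (.andE2 (.hyp h))⟩⟩
  | or A B ihA ihB =>
    intro T
    simp only [wtr, Forces, ihA, ihB]
    exact ⟨fun h => h.elim (fun h => T.2.1 _ (.orI1 (.hyp h))) (fun h => T.2.1 _ (.orI2 (.hyp h))),
      T.2.2 A B⟩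
  | imp A B ihA ihB =>
    intro T
    simp only [wtr, Forces, ihA, ihB]
    constructor
    · intro h
      by_contra hn
      have : ¬ Deriv False RuleR (insert A T.1) B := fun hd => hn (T.2.1 _ (.impI hd))
      obtain ⟨U, hU, hp, hB⟩ := mpc_lind this
      exact hB (h ⟨U, hp⟩ (fun x hx => hU (Or.inr hx)) (hU (Or.inl rfl)))
    · intro h U hU hA
      exact U.2.1 _ (mpc_mp (.hyp (hU h)) (.hyp hA))

-- STATEMENT 7
theorem stmt7 (Γ : Set PF) (A : PF) :
    MPC Γ A ↔ ModalConseq AxS4 (wtr '' Γ) (wtr A) := by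
  constructor
  · exact mpc_to_s4
  · rintro ⟨l, hl, hp⟩
    by_contra hn
    obtain ⟨T, hT, hpr, hA⟩ := mpc_lind hn
    have hs := s4_sound (R := fun S T : {T : Set PF // PrimeTh T} => S.1 ⊆ T.1)
      (fun _ _ h => h) (fun _ _ _ h1 h2 _ h => h2 (h1 h)) canV hp ⟨T, hpr⟩
    refine hA ((truth A ⟨T, hpr⟩).1 (hs (forces_conjL l ?_)))
    intro B hB
    obtain ⟨C, hC, rfl⟩ := hl B hB
    exact (truth C ⟨T, hpr⟩).2 (hT hC)
end

section
/- If Γ^b ⊢_KD4 A^b, then Γ ⊢_EBPC A. -/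
theorem s8_mono {X : Set PF} {D : PF} (h : EBPC X D) : ∀ {Y : Set PF}, X ⊆ Y → EBPC Y D := by
  unfold EBPC at *
  induction h with
  | hyp h => exact fun hs => .hyp (hs h)
  | andI _ _ i1 i2 => exact fun hs => .andI (i1 hs) (i2 hs)
  | andE1 _ i => exact fun hs => .andE1 (i hs)
  | andE2 _ i => exact fun hs => .andE2 (i hs)
  | orI1 _ i => exact fun hs => .orI1 (i hs)
  | orI2 _ i => exact fun hs => .orI2 (i hs)
  | orE _ _ _ i1 i2 i3 =>
    exact fun hs => .orE (i1 hs) (i2 (Set.insert_subset_insert hs)) (i3 (Set.insert_subset_insert hs))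
  | impI _ i => exact fun hs => .impI (i (Set.insert_subset_insert hs))
  | exfalso h _ i => exact fun hs => .exfalso h (i hs)
  | fAndI _ _ i1 i2 => exact fun hs => .fAndI (i1 hs) (i2 hs)
  | fOrE _ _ i1 i2 => exact fun hs => .fOrE (i1 hs) (i2 hs)
  | fTr _ _ i1 i2 => exact fun hs => .fTr (i1 hs) (i2 hs)
  | extra h _ i => exact fun hs => .extra h (fun p hp => i p hp hs)

theorem s8_ins {X Y : Set PF} (A : PF) (hs : ∀ x ∈ X, EBPC Y x) :
    ∀ x ∈ insert A X, EBPC (insert A Y) x := by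
  intro x hx
  rcases hx with rfl | hx
  · exact .hyp (Set.mem_insert _ _)
  · exact s8_mono (hs x hx) (Set.subset_insert _ _)

theorem s8_cut {X : Set PF} {D : PF} (h : EBPC X D) :
    ∀ {Y : Set PF}, (∀ x ∈ X, EBPC Y x) → EBPC Y D := by
  unfold EBPC at h
  induction h with
  | hyp h => exact fun hs => hs _ h
  | andI _ _ i1 i2 => exact fun hs => .andI (i1 hs) (i2 hs)
  | andE1 _ i => exact fun hs => .andE1 (i hs)
  | andE2 _ i => exact fun hs => .andE2 (i hs)
  | orI1 _ i => exact fun hs => .orI1 (i hs)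
  | orI2 _ i => exact fun hs => .orI2 (i hs)
  | orE _ _ _ i1 i2 i3 =>
    exact fun hs => .orE (i1 hs) (i2 (s8_ins _ hs)) (i3 (s8_ins _ hs))
  | impI _ i => exact fun hs => .impI (i (s8_ins _ hs))
  | exfalso h _ i => exact fun hs => .exfalso h (i hs)
  | fAndI _ _ i1 i2 => exact fun hs => .fAndI (i1 hs) (i2 hs)
  | fOrE _ _ i1 i2 => exact fun hs => .fOrE (i1 hs) (i2 hs)
  | fTr _ _ i1 i2 => exact fun hs => .fTr (i1 hs) (i2 hs)
  | extra h _ i => exact fun hs => .extra h (fun p hp => i p hp hs)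

def S8Fin (X : Set PF) (D : PF) : Prop := ∃ s : Finset PF, (∀ x ∈ s, x ∈ X) ∧ EBPC {x | x ∈ s} D

theorem s8_fin1 {X : Set PF} {A D : PF} (h : S8Fin X A)
    (f : ∀ Y, EBPC Y A → EBPC Y D) : S8Fin X D := by
  obtain ⟨s, hs, h⟩ := h
  exact ⟨s, hs, f _ h⟩

theorem s8_fin2 {X : Set PF} {A B D : PF} (h : S8Fin X A) (h' : S8Fin X B)
    (f : ∀ Y, EBPC Y A → EBPC Y B → EBPC Y D) : S8Fin X D := by
  obtain ⟨s, hs, h⟩ := h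
  obtain ⟨t, ht, h'⟩ := h'
  refine ⟨s ∪ t, ?_, f _ (s8_mono h ?_) (s8_mono h' ?_)⟩
  · intro x hx
    rcases Finset.mem_union.1 hx with h | h
    · exact hs x h
    · exact ht x h
  · intro x hx
    exact Finset.mem_union_left _ hx
  · intro x hx
    exact Finset.mem_union_right _ hx

theorem s8_finI {X : Set PF} {A D : PF} (h : S8Fin (insert A X) D) :
    ∃ s : Finset PF, (∀ x ∈ s, x ∈ X) ∧ EBPC (insert A {x | x ∈ s}) D := by
  obtain ⟨s, hs, h⟩ := h
  refine ⟨s.erase A, ?_, s8_mono h ?_⟩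
  · intro x hx
    rcases hs x (Finset.mem_of_mem_erase hx) with h | h
    · exact absurd h (Finset.ne_of_mem_erase hx)
    · exact h
  · intro x hx
    by_cases hA : x = A
    · exact Or.inl hA
    · exact Or.inr (Finset.mem_erase.2 ⟨hA, hx⟩)

theorem s8_fin {X : Set PF} {D : PF} (h : EBPC X D) : S8Fin X D := by
  unfold EBPC at h
  induction h with
  | @hyp X A h =>
    exact ⟨{A}, by simpa using h, .hyp (by simp)⟩
  | andI _ _ i1 i2 => exact s8_fin2 i1 i2 fun _ a b => .andI a b
  | andE1 _ i => exact s8_fin1 i fun _ a => .andE1 a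
  | andE2 _ i => exact s8_fin1 i fun _ a => .andE2 a
  | orI1 _ i => exact s8_fin1 i fun _ a => .orI1 a
  | orI2 _ i => exact s8_fin1 i fun _ a => .orI2 a
  | @orE X A B C _ _ _ i1 i2 i3 =>
    obtain ⟨s, hs, h1⟩ := i1
    obtain ⟨t, ht, h2⟩ := s8_finI i2
    obtain ⟨u, hu, h3⟩ := s8_finI i3
    refine ⟨s ∪ t ∪ u, ?_, .orE (s8_mono h1 ?_) (s8_mono h2 (Set.insert_subset_insert ?_))
      (s8_mono h3 (Set.insert_subset_insert ?_))⟩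
    · intro x hx
      simp only [Finset.mem_union] at hx
      rcases hx with (h | h) | h
      · exact hs x h
      · exact ht x h
      · exact hu x h
    all_goals
      intro x hx
      simp only [Finset.mem_union, Set.mem_setOf_eq] at *
      tauto
  | impI _ i =>
    obtain ⟨t, ht, h2⟩ := s8_finI i
    exact ⟨t, ht, .impI h2⟩
  | exfalso h _ i => exact s8_fin1 i fun _ a => .exfalso h a
  | fAndI _ _ i1 i2 => exact s8_fin2 i1 i2 fun _ a b => .fAndI a b
  | fOrE _ _ i1 i2 => exact s8_fin2 i1 i2 fun _ a b => .fOrE a b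
  | fTr _ _ i1 i2 => exact s8_fin2 i1 i2 fun _ a b => .fTr a b
  | extra h _ i =>
    obtain ⟨A, rfl, rfl⟩ := h
    refine s8_fin2 (i A (by simp)) (i A.neg (by simp)) fun Y a b =>
      .extra ⟨A, rfl, rfl⟩ ?_
    intro p hp
    simp only [List.mem_cons, List.not_mem_nil, or_false] at hp
    rcases hp with rfl | rfl
    · exact a
    · exact b

theorem s8_hyp1 (A : PF) : EBPC {A} A := .hyp rfl

theorem s8_top (X : Set PF) : EBPC X PF.top := .impI (.hyp (Set.mem_insert _ _))

structure S8PT (X : Set PF) : Prop where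
  closed : ∀ A, EBPC X A → A ∈ X
  prime : ∀ A B, A.or B ∈ X → A ∈ X ∨ B ∈ X
  cons : PF.bot ∉ X

structure S8Le (le : PF → PF → Prop) : Prop where
  tr : ∀ {a b c}, le a b → le b c → le a c
  andI : ∀ {a b c}, le a b → le a c → le a (b.and c)
  dist : ∀ {F C D B : PF}, le (F.and C) B → le (F.and D) B → le (F.and (C.or D)) B
  ded : ∀ {C D : PF}, EBPC {C} D → le C D

theorem s8_filter_closed {le : PF → PF → Prop} (L : S8Le le) {X : Set PF} {A : PF} (hA : A ∈ X)
    (up : ∀ C D, C ∈ X → le C D → D ∈ X) (hand : ∀ C D, C ∈ X → D ∈ X → C.and D ∈ X)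
    (D : PF) (h : EBPC X D) : D ∈ X := by
  obtain ⟨s, hs, h⟩ := s8_fin h
  have : ∃ F ∈ X, ∀ x ∈ s, EBPC {F} x := by
    clear h
    induction s using Finset.induction_on with
    | empty => exact ⟨A, hA, by simp⟩
    | insert a s ha ih =>
      obtain ⟨F, hF, h⟩ := ih (fun x hx => hs x (Finset.mem_insert_of_mem hx))
      refine ⟨a.and F, hand _ _ (hs a (Finset.mem_insert_self _ _)) hF, ?_⟩
      intro x hx
      rcases Finset.mem_insert.1 hx with rfl | hx
      · exact .andE1 (s8_hyp1 _)
      · refine s8_cut (h x hx) ?_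
        rintro y rfl
        exact .andE2 (s8_hyp1 _)
  obtain ⟨F, hF, h'⟩ := this
  exact up F D hF (L.ded (s8_cut h h'))

theorem s8_ext {le : PF → PF → Prop} (L : S8Le le) {A B : PF} (hAB : ¬ le A B) :
    ∃ X, S8PT X ∧ A ∈ X ∧ B ∉ X ∧ ∀ C D, C ∈ X → le C D → D ∈ X := by
  have refl : ∀ a, le a a := fun a => L.ded (s8_hyp1 a)
  have and1 : ∀ a b : PF, le (a.and b) a := fun a b => L.ded (.andE1 (s8_hyp1 _))
  have and2 : ∀ a b : PF, le (a.and b) b := fun a b => L.ded (.andE2 (s8_hyp1 _))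
  let S : Set (Set PF) := {X | A ∈ X ∧ (∀ C D, C ∈ X → le C D → D ∈ X) ∧
    (∀ C D, C ∈ X → D ∈ X → C.and D ∈ X) ∧ B ∉ X}
  have hS0 : {E | le A E} ∈ S :=
    ⟨refl A, fun C D h h' => L.tr h h', fun C D h h' => L.andI h h', hAB⟩
  obtain ⟨X, hX0, hX⟩ := zorn_subset_nonempty S (by
    intro c hc hch ⟨y, hy⟩
    refine ⟨⋃₀ c, ⟨⟨y, hy, (hc hy).1⟩, ?_, ?_, ?_⟩, fun s hs => Set.subset_sUnion_of_mem hs⟩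
    · rintro C D ⟨z, hz, hC⟩ h
      exact ⟨z, hz, (hc hz).2.1 C D hC h⟩
    · rintro C D ⟨z, hz, hC⟩ ⟨w, hw, hD⟩
      rcases hch.total hz hw with h | h
      · exact ⟨w, hw, (hc hw).2.2.1 _ _ (h hC) hD⟩
      · exact ⟨z, hz, (hc hz).2.2.1 _ _ hC (h hD)⟩
    · rintro ⟨z, hz, hB⟩
      exact (hc hz).2.2.2 hB) _ hS0
  obtain ⟨hA, up, hand, hB⟩ := hX.prop
  have key : ∀ C, C ∉ X → ∃ F ∈ X, le (F.and C) B := by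
    intro C hC
    by_contra hn
    push Not at hn
    have hmem : {E | ∃ F ∈ X, le (F.and C) E} ∈ S := by
      refine ⟨⟨A, hA, and1 _ _⟩, ?_, ?_, ?_⟩
      · rintro E D ⟨F, hF, h⟩ h'
        exact ⟨F, hF, L.tr h h'⟩
      · rintro E D ⟨F, hF, h⟩ ⟨G, hG, h'⟩
        refine ⟨F.and G, hand _ _ hF hG, L.andI (L.tr ?_ h) (L.tr ?_ h')⟩
        · exact L.andI (L.tr (and1 _ _) (and1 _ _)) (and2 _ _)
        · exact L.andI (L.tr (and1 _ _) (and2 _ _)) (and2 _ _)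
      · rintro ⟨F, hF, h⟩
        exact hn F hF h
    have hle : X ⊆ {E | ∃ F ∈ X, le (F.and C) E} := fun E hE => ⟨E, hE, and1 _ _⟩
    exact hC (hX.le_of_ge hmem hle ⟨A, hA, and2 _ _⟩)
  refine ⟨X, ⟨s8_filter_closed L hA up hand, ?_, ?_⟩, hA, hB, up⟩
  · intro C D hCD
    by_contra hn
    push Not at hn
    obtain ⟨F, hF, h⟩ := key C hn.1
    obtain ⟨G, hG, h'⟩ := key D hn.2
    apply hB
    refine up ((F.and G).and (C.or D)) B (hand _ _ (hand _ _ hF hG) hCD) (L.dist (L.tr ?_ h) (L.tr ?_ h'))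
    · exact L.andI (L.tr (and1 _ _) (and1 _ _)) (and2 _ _)
    · exact L.andI (L.tr (and1 _ _) (and2 _ _)) (and2 _ _)
  · intro hb
    exact hB (up _ _ hb (L.ded (.exfalso trivial (s8_hyp1 _))))

theorem s8_dist (F C D : PF) (X : Set PF) :
    EBPC (insert (F.and (C.or D)) X) ((F.and C).or (F.and D)) := by
  have h : EBPC (insert (F.and (C.or D)) X) (F.and (C.or D)) := .hyp (Set.mem_insert _ _)
  have h2 : ∀ Z, EBPC (insert Z (insert (F.and (C.or D)) X)) F := fun Z =>
    .andE1 (B := C.or D) (s8_mono h (Set.subset_insert _ _))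
  exact .orE (.andE2 h) (.orI1 (.andI (h2 _) (.hyp (Set.mem_insert _ _))))
    (.orI2 (.andI (h2 _) (.hyp (Set.mem_insert _ _))))

theorem s8_le1 {X : Set PF} (h : S8PT X) : S8Le (fun C D => C.imp D ∈ X) where
  tr h1 h2 := h.closed _ (.fTr (.hyp h1) (.hyp h2))
  andI h1 h2 := h.closed _ (.fAndI (.hyp h1) (.hyp h2))
  dist h1 h2 := h.closed _ (.fTr (.impI (s8_dist _ _ _ _)) (.fOrE (.hyp h1) (.hyp h2)))
  ded h1 := h.closed _ (.impI (s8_mono h1 (by simp)))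

theorem s8_cut1 {X : Set PF} {A B : PF} (h1 : EBPC X A) (h2 : EBPC (insert A X) B) : EBPC X B := by
  refine s8_cut h2 ?_
  rintro x (rfl | hx)
  · exact h1
  · exact .hyp hx

theorem s8_le2 (X : Set PF) : S8Le (fun C D => EBPC (insert C X) D) where
  tr h1 h2 := s8_cut1 h1 (s8_mono h2 (Set.insert_subset_insert (Set.subset_insert _ _)))
  andI h1 h2 := .andI h1 h2
  dist h1 h2 := .orE (s8_dist _ _ _ _)
    (s8_mono h1 (Set.insert_subset_insert (Set.subset_insert _ _)))
    (s8_mono h2 (Set.insert_subset_insert (Set.subset_insert _ _)))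
  ded h1 := s8_mono h1 (by simp)

/-- Canonical worlds. -/
def S8W : Type := {X : Set PF // S8PT X}

def S8R (X Y : S8W) : Prop := ∀ C D, C.imp D ∈ X.1 → C ∈ Y.1 → D ∈ Y.1

theorem s8_sub {X Y : S8W} (h : S8R X Y) : X.1 ⊆ Y.1 := by
  intro C hC
  refine h PF.top C (X.2.closed _ (.impI (.hyp (Set.mem_insert_of_mem _ hC)))) (Y.2.closed _ (s8_top _))

theorem s8_trans {X Y Z : S8W} (h : S8R X Y) (h' : S8R Y Z) : S8R X Z :=
  fun C D h1 h2 => h' C D (s8_sub h h1) h2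

theorem s8_imp (X : S8W) (A B : PF) :
    A.imp B ∈ X.1 ↔ ∀ Y, S8R X Y → A ∈ Y.1 → B ∈ Y.1 := by
  constructor
  · intro h Y hY hA
    exact hY A B h hA
  · intro h
    by_contra hn
    obtain ⟨Y, hY, hA, hB, up⟩ := s8_ext (s8_le1 X.2) hn
    exact hB (h ⟨Y, hY⟩ (fun C D h1 h2 => up C D h2 h1) hA)

theorem s8_serial (X : S8W) : ∃ Y, S8R X Y := by
  by_contra hn
  push Not at hn
  have h : PF.top.neg ∈ X.1 := (s8_imp X PF.top PF.bot).2 (fun Y hY => absurd hY (hn Y))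
  refine X.2.cons (X.2.closed _ (.extra ⟨PF.top, rfl, rfl⟩ ?_))
  intro p hp
  simp only [List.mem_cons, List.not_mem_nil, or_false] at hp
  rcases hp with rfl | rfl
  · exact s8_top _
  · exact .hyp h

/-- Worlds of the modal model: pairs of canonical worlds. -/
def S8E : Type := S8W × S8W

def S8Q (e f : S8E) : Prop := S8R f.1 f.2 ∧ (e.2 = f.1 ∨ S8R e.2 f.1)

def S8V (n : ℕ) (e : S8E) : Prop := PF.atom n ∈ e.1.1

theorem s8_Q_R {e f : S8E} (h : S8Q e f) : S8R e.2 f.2 := by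
  obtain ⟨hf, h⟩ := h
  rcases h with h | h
  · rw [h]; exact hf
  · exact s8_trans h hf

theorem s8_Q_trans {e f g : S8E} (h : S8Q e f) (h' : S8Q f g) : S8Q e g := by
  obtain ⟨hg, h'⟩ := h'
  refine ⟨hg, Or.inr ?_⟩
  rcases h' with h' | h'
  · rw [← h']; exact s8_Q_R h
  · exact s8_trans (s8_Q_R h) h'

theorem s8_Q_serial (e : S8E) : ∃ f, S8Q e f ∧ f.1 = e.2 := by
  obtain ⟨Y, hY⟩ := s8_serial e.2
  exact ⟨(e.2, Y), ⟨hY, Or.inl rfl⟩, rfl⟩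

theorem s8_truth (A : PF) : ∀ e : S8E, Forces S8Q S8V e (bhk A) ↔ A ∈ e.2.1 := by
  induction A with
  | atom n =>
    intro e
    simp only [bhk, Forces]
    constructor
    · intro h
      obtain ⟨f, hf, h1⟩ := s8_Q_serial e
      have := h f hf
      unfold S8V at this
      rwa [h1] at this
    · intro h f hf
      unfold S8V
      rcases hf.2 with hf | hf
      · rwa [← hf]
      · exact s8_sub hf h
  | bot =>
    intro e
    simp only [bhk, Forces]
    constructor
    · intro h
      obtain ⟨f, hf, h1⟩ := s8_Q_serial e
      exact (h f hf).elim
    · intro h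
      exact (e.2.2.cons h).elim
  | and A B ihA ihB =>
    intro e
    simp only [bhk, Forces, ihA, ihB]
    have cl := e.2.2.closed
    exact ⟨fun h => cl _ (.andI (.hyp h.1) (.hyp h.2)),
      fun h => ⟨cl _ (.andE1 (.hyp h)), cl _ (.andE2 (.hyp h))⟩⟩
  | or A B ihA ihB =>
    intro e
    simp only [bhk, Forces, ihA, ihB]
    have cl := e.2.2.closed
    exact ⟨fun h => h.elim (fun h => cl _ (.orI1 (.hyp h))) (fun h => cl _ (.orI2 (.hyp h))),
      e.2.2.prime A B⟩
  | imp A B ihA ihB =>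
    intro e
    simp only [bhk, Forces, ihA, ihB]
    rw [s8_imp]
    constructor
    · intro h Y hY
      exact h (e.2, Y) ⟨hY, Or.inl rfl⟩
    · intro h f hf
      exact h f.2 (s8_Q_R hf)

theorem s8_sound {A : MF} (h : Prv AxKD4 A) : ∀ e : S8E, Forces S8Q S8V e A := by
  induction h with
  | taut h =>
    intro e
    classical
    have := h (fun B => decide (Forces S8Q S8V e B)) (by
      refine ⟨?_, ?_, ?_, ?_, ?_⟩
      · exact decide_eq_false (fun h => h)
      · intro A B; rw [Bool.eq_iff_iff, Bool.and_eq_true]; simp only [decide_eq_true_iff]; simp only [Forces]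
      · intro A B; rw [Bool.eq_iff_iff, Bool.or_eq_true]; simp only [decide_eq_true_iff]; simp only [Forces]
      · intro A B
        rw [Bool.eq_iff_iff, Bool.or_eq_true, Bool.not_eq_true', decide_eq_false_iff_not]
        simp only [decide_eq_true_iff]; simp only [Forces]
        tauto
      · intro A
        rw [Bool.eq_iff_iff, Bool.not_eq_true', decide_eq_false_iff_not]
        simp only [decide_eq_true_iff]; simp only [Forces])
    simpa using this
  | axK => exact fun e h1 h2 u hu => h1 u hu (h2 u hu)
  | extra h =>
    intro e
    rcases h with ⟨B, rfl⟩ | h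
    · exact fun h u hu v hv => h v (s8_Q_trans hu hv)
    · rw [h]
      intro h
      obtain ⟨f, hf, _⟩ := s8_Q_serial e
      exact h f hf
  | mp _ _ i1 i2 => exact fun e => i1 e (i2 e)
  | nec _ i => exact fun e u _ => i u

theorem s8_conj (e : S8E) (l : List MF) (h : ∀ B ∈ l, Forces S8Q S8V e B) :
    Forces S8Q S8V e (conjL l) := by
  induction l with
  | nil => exact fun h => h
  | cons a l ih =>
    exact ⟨h a (by simp), ih fun B hB => h B (by simp [hB])⟩

-- STATEMENT 8
theorem stmt8 (Γ : Set PF) (A : PF)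
    (h : ModalConseq AxKD4 (bhk '' Γ) (bhk A)) :
    EBPC Γ A := by
  by_contra hn
  have hn' : ¬ EBPC (insert PF.top Γ) A := fun h' => hn (s8_cut1 (s8_top _) h')
  obtain ⟨X, hX, ht, hA, up⟩ := s8_ext (s8_le2 Γ) hn'
  obtain ⟨l, hl, hp⟩ := h
  let w : S8W := ⟨X, hX⟩
  let e : S8E := (w, w)
  refine hA ((s8_truth A e).1 (s8_sound hp e (s8_conj e l ?_)))
  intro B hB
  obtain ⟨C, hC, rfl⟩ := hl B hB
  exact (s8_truth C e).2 (up _ C ht (.hyp (Set.mem_insert_of_mem _ hC)))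
end

section
/- Let C' be the rule: from ⊤→⊥ infer ⊥. Then for every set Γ of propositional formulas and every propositional formula A: Γ ⊢ A in BPC + C if and only if Γ ⊢ A in BPC + C'. In particular, EBPC can equivalently be axiomatized as BPC + C'. -/
theorem Deriv.weak {ef : Prop} {R : List PF → PF → Prop} {Γ : Set PF} {A : PF}
    (h : Deriv ef R Γ A) : ∀ {Δ : Set PF}, Γ ⊆ Δ → Deriv ef R Δ A := by
  induction h with
  | hyp h => exact fun s => .hyp (s h)
  | andI _ _ i j => exact fun s => .andI (i s) (j s)
  | andE1 _ i => exact fun s => .andE1 (i s)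
  | andE2 _ i => exact fun s => .andE2 (i s)
  | orI1 _ i => exact fun s => .orI1 (i s)
  | orI2 _ i => exact fun s => .orI2 (i s)
  | orE _ _ _ i j k =>
    exact fun s => .orE (i s) (j (Set.insert_subset_insert s)) (k (Set.insert_subset_insert s))
  | impI _ i => exact fun s => .impI (i (Set.insert_subset_insert s))
  | exfalso e _ i => exact fun s => .exfalso e (i s)
  | fAndI _ _ i j => exact fun s => .fAndI (i s) (j s)
  | fOrE _ _ i j => exact fun s => .fOrE (i s) (j s)
  | fTr _ _ i j => exact fun s => .fTr (i s) (j s)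
  | extra r _ i => exact fun s => .extra r (fun p hp => i p hp s)

theorem Deriv.mapRule {ef : Prop} {R S : List PF → PF → Prop}
    (H : ∀ (Γ : Set PF) ps c, R ps c → (∀ p ∈ ps, Deriv ef S Γ p) → Deriv ef S Γ c)
    {Γ : Set PF} {A : PF} (h : Deriv ef R Γ A) : Deriv ef S Γ A := by
  induction h with
  | hyp h => exact .hyp h
  | andI _ _ i j => exact .andI i j
  | andE1 _ i => exact .andE1 i
  | andE2 _ i => exact .andE2 i
  | orI1 _ i => exact .orI1 i
  | orI2 _ i => exact .orI2 i
  | orE _ _ _ i j k => exact .orE i j k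
  | impI _ i => exact .impI i
  | exfalso e _ i => exact .exfalso e i
  | fAndI _ _ i j => exact .fAndI i j
  | fOrE _ _ i j => exact .fOrE i j
  | fTr _ _ i j => exact .fTr i j
  | extra r _ i => exact H _ _ _ r i

-- STATEMENT 10
theorem stmt10 (Γ : Set PF) (A : PF) :
    Deriv True RuleC Γ A ↔ Deriv True RuleC' Γ A := by
  constructor
  · refine Deriv.mapRule ?_
    rintro Γ ps c ⟨B, rfl, rfl⟩ hp
    refine .extra (ps := [PF.top.imp .bot]) ⟨rfl, rfl⟩ ?_
    intro p hp'
    rw [List.mem_singleton] at hp'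
    subst hp'
    have h1 : Deriv True RuleC' Γ B := hp B (by simp)
    have h2 : Deriv True RuleC' Γ (B.imp .bot) := hp B.neg (by simp)
    exact .fTr (.impI (h1.weak (Set.subset_insert _ _))) h2
  · refine Deriv.mapRule ?_
    rintro Γ ps c ⟨rfl, rfl⟩ hp
    refine .extra (ps := [PF.top, PF.top.neg]) ⟨PF.top, rfl, rfl⟩ ?_
    intro p hp'
    simp only [List.mem_cons, List.not_mem_nil, or_false] at hp'
    rcases hp' with rfl | rfl
    · exact .impI (.hyp (Set.mem_insert _ _))
    · exact hp _ (List.mem_singleton.2 rfl)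
end

section
/- Let L' be the rule: from (⊤→A)→A infer ⊤→A. Then for every set Γ of propositional formulas and every propositional formula A: Γ ⊢ A in BPC + L if and only if Γ ⊢ A in BPC + L'. In particular, FPL can equivalently be axiomatized as BPC + L'. -/
theorem Deriv.weak12 {ef : Prop} {Rule : List PF → PF → Prop} {Γ : Set PF} {A : PF}
    (h : Deriv ef Rule Γ A) : ∀ {Δ : Set PF}, Γ ⊆ Δ → Deriv ef Rule Δ A := by
  induction h with
  | hyp h => intro Δ s; exact .hyp (s h)
  | andI _ _ i j => intro Δ s; exact .andI (i s) (j s)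
  | andE1 _ i => intro Δ s; exact .andE1 (i s)
  | andE2 _ i => intro Δ s; exact .andE2 (i s)
  | orI1 _ i => intro Δ s; exact .orI1 (i s)
  | orI2 _ i => intro Δ s; exact .orI2 (i s)
  | orE _ _ _ i j k =>
    intro Δ s
    exact .orE (i s) (j (Set.insert_subset_insert s)) (k (Set.insert_subset_insert s))
  | impI _ i => intro Δ s; exact .impI (i (Set.insert_subset_insert s))
  | exfalso e _ i => intro Δ s; exact .exfalso e (i s)
  | fAndI _ _ i j => intro Δ s; exact .fAndI (i s) (j s)
  | fOrE _ _ i j => intro Δ s; exact .fOrE (i s) (j s)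
  | fTr _ _ i j => intro Δ s; exact .fTr (i s) (j s)
  | extra r _ i => intro Δ s; exact .extra r (fun p hp => i p hp s)

theorem Deriv.mono12 {ef : Prop} {R S : List PF → PF → Prop}
    (H : ∀ ps c, R ps c → ∀ Γ : Set PF, (∀ p ∈ ps, Deriv ef S Γ p) → Deriv ef S Γ c)
    {Γ : Set PF} {A : PF} (h : Deriv ef R Γ A) : Deriv ef S Γ A := by
  induction h with
  | hyp h => exact .hyp h
  | andI _ _ i j => exact .andI i j
  | andE1 _ i => exact .andE1 i
  | andE2 _ i => exact .andE2 i
  | orI1 _ i => exact .orI1 i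
  | orI2 _ i => exact .orI2 i
  | orE _ _ _ i j k => exact .orE i j k
  | impI _ i => exact .impI i
  | exfalso e _ i => exact .exfalso e i
  | fAndI _ _ i j => exact .fAndI i j
  | fOrE _ _ i j => exact .fOrE i j
  | fTr _ _ i j => exact .fTr i j
  | extra r _ i => exact H _ _ r _ i

theorem Deriv.step12 {ef : Prop} {R : List PF → PF → Prop} {Γ : Set PF} {A B : PF}
    (P : Deriv ef R Γ ((A.and (A.imp B)).imp B))
    (Q : Deriv ef R Γ (PF.top.imp (A.imp B))) : Deriv ef R Γ (A.imp B) := by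
  have t : Deriv ef R Γ (A.imp PF.top) := .impI (.impI (.hyp (Set.mem_insert _ _)))
  exact .fTr (.fAndI (.impI (.hyp (Set.mem_insert _ _))) (.fTr t Q)) P

-- STATEMENT 12
theorem stmt12 (Γ : Set PF) (A : PF) :
    Deriv True RuleL Γ A ↔ Deriv True RuleL' Γ A := by
  constructor
  · refine Deriv.mono12 ?_
    rintro ps c ⟨A, B, rfl, rfl⟩ Γ h
    have P := h _ (List.mem_singleton.2 rfl)
    refine Deriv.step12 P (.extra ⟨_, rfl, rfl⟩ ?_)
    intro p hp
    rw [List.mem_singleton.1 hp]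
    exact .impI (Deriv.step12 (P.weak12 (Set.subset_insert _ _)) (.hyp (Set.mem_insert _ _)))
  · refine Deriv.mono12 ?_
    rintro ps c ⟨A, rfl, rfl⟩ Γ h
    have P := h _ (List.mem_singleton.2 rfl)
    refine .extra ⟨_, _, rfl, rfl⟩ ?_
    intro p hp
    rw [List.mem_singleton.1 hp]
    exact .fTr (.impI (.andE2 (.hyp (Set.mem_insert _ _)))) P
end

section
/- Let (K, ≤, V) be an MPC-Kripke model. Define an S4 Kripke model on the same frame (K, ≤) with valuation V'(p) = V(p) for every atom p of the propositional language and V'(q) = V(⊥) for the fresh atom q. Then for every propositional formula B and every node l ∈ K: l ⊩ B in the MPC-Kripke model if and only if l ⊨ B^w in the S4 Kripke model. Consequently, any MPC-Kripke countermodel to Γ ⇒ A yields an S4 Kripke countermodel to Γ^w ⇒ A^w. -/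
-- STATEMENT 13
theorem stmt13 {W : Type} (le : W → W → Prop)
    (hrefl : Reflexive le) (htrans : Transitive le)
    (V : ℕ → W → Prop) (Vbot : W → Prop)
    (hupV : ∀ n x y, le x y → V n x → V n y)
    (hupB : ∀ x y, le x y → Vbot x → Vbot y) :
    (∀ (B : PF) (l : W),
        MForces le V Vbot l B ↔ Forces le (shiftVal V Vbot) l (wtr B)) ∧
    (∀ (Γ : Set PF) (A : PF) (l : W),
        (∀ C ∈ Γ, MForces le V Vbot l C) → ¬ MForces le V Vbot l A →
        (∀ C ∈ Γ, Forces le (shiftVal V Vbot) l (wtr C)) ∧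
        ¬ Forces le (shiftVal V Vbot) l (wtr A)) := by
  have key : ∀ (B : PF) (l : W),
      MForces le V Vbot l B ↔ Forces le (shiftVal V Vbot) l (wtr B) := by
    intro B
    induction B with
    | atom n =>
      intro l
      simp only [MForces, wtr, Forces, shiftVal]
      exact ⟨fun h u hu => hupV n l u hu h, fun h => h l (hrefl l)⟩
    | bot =>
      intro l
      simp only [MForces, wtr, Forces, shiftVal]
      exact ⟨fun h u hu => hupB l u hu h, fun h => h l (hrefl l)⟩
    | and A B ihA ihB =>
      intro l
      simp only [MForces, wtr, Forces, ihA, ihB]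
    | or A B ihA ihB =>
      intro l
      simp only [MForces, wtr, Forces, ihA, ihB]
    | imp A B ihA ihB =>
      intro l
      simp only [MForces, wtr, Forces, ihA, ihB]
  refine ⟨key, fun Γ A l hΓ hA => ⟨fun C hC => (key C l).1 (hΓ C hC), fun h => hA ((key A l).2 h)⟩⟩
end
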